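/- arXiv:1810.07126 — 6 statements merged into one kernel-verified Lean document; each statement's English description precedes it below -/
import Mathlib

section
/- The set W_d of d×d matrices of pairwise van der Waerden's coefficients ζ(Xi,Xj) = ρ(Φ^{-1}(Fi(Xi)), Φ^{-1}(Fj(Xj))) of d-dimensional random vectors X with continuous margins Fi coincides with the set P_d of all d×d correlation matrices (symmetric positive semi-definite matrices with unit diagonal); in particular, any P ∈ P_d is attained as the van der Waerden matrix of the multivariate normal distribution with covariance matrix P. -/
open MeasureTheory ProbabilityTheory Set

noncomputable section

/-- The uniform distribution on (0,1). -/
def unif01 : Measure ℝ := volume.restrict (Set.Ioo (0:ℝ) 1)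

/-- Pearson's correlation coefficient of two real random variables. -/
def pearson {Ω : Type*} [MeasurableSpace Ω] (μ : Measure Ω) (Y1 Y2 : Ω → ℝ) : ℝ :=
  ((∫ ω, Y1 ω * Y2 ω ∂μ) - (∫ ω, Y1 ω ∂μ) * (∫ ω, Y2 ω ∂μ)) /
    Real.sqrt (variance Y1 μ * variance Y2 μ)

/-- The distribution function (CDF) of a measure on ℝ. -/
def cdfOf (ν : Measure ℝ) : ℝ → ℝ := fun x => (ν (Set.Iic x)).toReal

/-- The quantile function (generalized inverse) of a distribution function. -/
def quantileFn (G : ℝ → ℝ) (p : ℝ) : ℝ := sInf {x : ℝ | p ≤ G x}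

/-- A distribution on ℝ is symmetric (about some point `m`). -/
def SymmetricDist (G : Measure ℝ) : Prop :=
  ∃ m : ℝ, G.map (fun x => 2 * m - x) = G

/-- A distribution on ℝ is non-degenerate: it is not a point mass. -/
def Nondegenerate (G : Measure ℝ) : Prop := ∀ c : ℝ, G ≠ Measure.dirac c

/-- A distribution is concordance inducing: non-degenerate, symmetric,
with finite second moment. -/
def ConcordanceInducing (G : Measure ℝ) : Prop :=
  Nondegenerate G ∧ SymmetricDist G ∧ Integrable (fun x : ℝ => x ^ 2) G

/-- `corrSet ν d` is the set of `d×d` Pearson correlation matrices of random vectors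
all of whose margins have distribution `ν`. -/
def corrSet (ν : Measure ℝ) (d : ℕ) : Set (Matrix (Fin d) (Fin d) ℝ) :=
  {P | ∃ μ : Measure (Fin d → ℝ), IsProbabilityMeasure μ ∧
        (∀ j, μ.map (fun x => x j) = ν) ∧
        (∀ i j, P i j = pearson μ (fun x => x i) (fun x => x j))}

/-- The Bernoulli distribution `Bern(p)` on ℝ. -/
def bern (p : ℝ) : Measure ℝ :=
  ENNReal.ofReal p • Measure.dirac (1:ℝ) + ENNReal.ofReal (1 - p) • Measure.dirac (0:ℝ)

/-- The set of `d×d` correlation matrices of random vectors with `Bern(1/2)` margins. -/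
def PBd (d : ℕ) : Set (Matrix (Fin d) (Fin d) ℝ) := corrSet (bern (1/2)) d

/-- The set of all `d×d` correlation matrices: symmetric positive semi-definite
matrices with entries in `[-1,1]` and unit diagonal. -/
def Pd (d : ℕ) : Set (Matrix (Fin d) (Fin d) ℝ) :=
  {P | P.IsSymm ∧ (∀ i j, P i j ∈ Set.Icc (-1:ℝ) 1) ∧ P.PosSemidef ∧ ∀ i, P i i = 1}

/-- The standard normal distribution function Φ. -/
def stdNormalCDF : ℝ → ℝ := cdfOf (gaussianReal 0 1)

/-- The van der Waerden transform of the `i`-th coordinate of a random vector with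
law `μ`: `x ↦ Φ⁻¹(Fi(x i))` where `Fi` is the `i`-th marginal distribution function. -/
def vdWScore (d : ℕ) (μ : Measure (Fin d → ℝ)) (i : Fin d) : (Fin d → ℝ) → ℝ :=
  fun x => quantileFn stdNormalCDF (cdfOf (μ.map fun y => y i) (x i))

/-- The set of `d×d` matrices of pairwise van der Waerden's coefficients
`ζ(Xi,Xj) = ρ(Φ⁻¹(Fi(Xi)), Φ⁻¹(Fj(Xj)))` of random vectors with continuous margins. -/
def Wd (d : ℕ) : Set (Matrix (Fin d) (Fin d) ℝ) :=
  {P | ∃ μ : Measure (Fin d → ℝ), IsProbabilityMeasure μ ∧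
        (∀ j, Continuous (cdfOf (μ.map fun x => x j))) ∧
        (∀ i j, P i j = pearson μ (vdWScore d μ i) (vdWScore d μ j))}

lemma cdfOf_eq (ν : Measure ℝ) [IsProbabilityMeasure ν] : cdfOf ν = cdf ν := by
  funext x
  rw [cdf_eq_real]; rfl

lemma cdfOf_mono (ν : Measure ℝ) [IsProbabilityMeasure ν] : Monotone (cdfOf ν) := by
  rw [cdfOf_eq]; exact monotone_cdf ν

lemma ofReal_cdfOf (ν : Measure ℝ) [IsProbabilityMeasure ν] (x : ℝ) :
    ENNReal.ofReal (cdfOf ν x) = ν (Iic x) := by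
  rw [cdfOf_eq, ofReal_cdf]

lemma cdfOf_cont (ν : Measure ℝ) [IsProbabilityMeasure ν] (h : ∀ x, ν {x} = 0) :
    Continuous (cdfOf ν) := by
  rw [cdfOf_eq, continuous_iff_continuousAt]
  intro x
  rw [(monotone_cdf ν).continuousAt_iff_leftLim_eq_rightLim, StieltjesFunction.rightLim_eq]
  have h1 := (cdf ν).measure_singleton x
  rw [measure_cdf, h x] at h1
  have h2 := ENNReal.ofReal_eq_zero.1 h1.symm
  have h3 := (monotone_cdf ν).leftLim_le (le_refl x)
  linarith

lemma gauss_single (x : ℝ) : gaussianReal 0 1 {x} = 0 :=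
  (gaussianReal_absolutelyContinuous 0 one_ne_zero) (by simp)

lemma Phi_cont : Continuous stdNormalCDF := cdfOf_cont _ gauss_single

lemma Phi_strictMono : StrictMono stdNormalCDF := by
  intro x y hxy
  have h0 : gaussianReal 0 1 (Ioc x y) ≠ 0 := by
    intro h
    have := (gaussianReal_absolutelyContinuous' 0 one_ne_zero) h
    simp at this
    linarith
  have h1 : gaussianReal 0 1 (Ioc x y) = ENNReal.ofReal (stdNormalCDF y - stdNormalCDF x) := by
    unfold stdNormalCDF
    rw [cdfOf_eq, ← StieltjesFunction.measure_Ioc, measure_cdf]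
  rw [h1] at h0
  by_contra hc
  exact h0 (ENNReal.ofReal_eq_zero.2 (by linarith))

lemma exists_lt_cdf (ν : Measure ℝ) [IsProbabilityMeasure ν] {p : ℝ} (hp : p < 1) :
    ∃ x, p < cdfOf ν x := by
  rw [cdfOf_eq]
  exact ((tendsto_cdf_atTop ν).eventually (lt_mem_nhds hp)).exists

lemma exists_cdf_lt (ν : Measure ℝ) [IsProbabilityMeasure ν] {p : ℝ} (hp : 0 < p) :
    ∃ x, cdfOf ν x < p := by
  rw [cdfOf_eq]
  exact ((tendsto_cdf_atBot ν).eventually (gt_mem_nhds hp)).exists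

lemma Phi_mem (x : ℝ) : stdNormalCDF x ∈ Ioo (0:ℝ) 1 := by
  constructor
  · have h1 : 0 ≤ stdNormalCDF (x-1) := by
      unfold stdNormalCDF cdfOf; positivity
    exact h1.trans_lt (Phi_strictMono (by linarith))
  · have h1 : stdNormalCDF (x+1) ≤ 1 := by
      unfold stdNormalCDF; rw [cdfOf_eq]; exact cdf_le_one _ _
    exact (Phi_strictMono (by linarith : x < x + 1)).trans_le h1

lemma q_Phi (x : ℝ) : quantileFn stdNormalCDF (stdNormalCDF x) = x := by
  unfold quantileFn
  simp only [Phi_strictMono.le_iff_le]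
  exact csInf_Ici

lemma q_exists {p : ℝ} (hp : p ∈ Ioo (0:ℝ) 1) : ∃ x, stdNormalCDF x = p := by
  obtain ⟨a, ha⟩ := exists_cdf_lt (gaussianReal 0 1) hp.1
  obtain ⟨b, hb⟩ := exists_lt_cdf (gaussianReal 0 1) hp.2
  exact mem_range_of_exists_le_of_exists_ge Phi_cont ⟨a, ha.le⟩ ⟨b, hb.le⟩

lemma q_le {p : ℝ} (hp : p ∈ Ioo (0:ℝ) 1) (y : ℝ) :
    quantileFn stdNormalCDF p ≤ y ↔ p ≤ stdNormalCDF y := by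
  obtain ⟨x, rfl⟩ := q_exists hp
  rw [q_Phi, Phi_strictMono.le_iff_le]

lemma q_out {p : ℝ} (hp : p ∉ Ioo (0:ℝ) 1) : quantileFn stdNormalCDF p = 0 := by
  unfold quantileFn
  by_cases h : 0 < p
  · have h1 : 1 ≤ p := by
      by_contra hc
      exact hp ⟨h, not_le.1 hc⟩
    have : {x : ℝ | p ≤ stdNormalCDF x} = ∅ := by
      ext x
      simp only [mem_setOf_eq, mem_empty_iff_false, iff_false, not_le]
      exact (Phi_mem x).2.trans_le h1
    rw [this, Real.sInf_empty]
  · have : {x : ℝ | p ≤ stdNormalCDF x} = univ := by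
      ext x
      simp only [mem_setOf_eq, mem_univ, iff_true]
      exact (not_lt.1 h).trans (Phi_mem x).1.le
    rw [this, Real.sInf_univ]

lemma q_meas : Measurable (quantileFn stdNormalCDF) := by
  refine measurable_of_Iic fun y => ?_
  have : quantileFn stdNormalCDF ⁻¹' Iic y
      = (Ioo 0 1 ∩ Iic (stdNormalCDF y)) ∪ ((Ioo 0 1)ᶜ ∩ {_p | (0:ℝ) ≤ y}) := by
    ext p
    by_cases hp : p ∈ Ioo (0:ℝ) 1
    · simp only [mem_preimage, mem_Iic, q_le hp, mem_union, mem_inter_iff, hp, mem_compl_iff,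
        true_and, not_true_eq_false, false_and, or_false]
    · simp only [mem_preimage, mem_Iic, q_out hp, mem_union, mem_inter_iff, hp, mem_compl_iff,
        true_and, not_false_eq_true, false_and, false_or, mem_setOf_eq]
  rw [this]
  exact (measurableSet_Ioo.inter measurableSet_Iic).union
    (measurableSet_Ioo.compl.inter (MeasurableSet.const _))

lemma level (ν : Measure ℝ) [IsProbabilityMeasure ν] (hc : Continuous (cdfOf ν))
    {p : ℝ} (hp : p ∈ Ioo (0:ℝ) 1) : ν {x | cdfOf ν x ≤ p} = ENNReal.ofReal p := by
  obtain ⟨a, ha⟩ := exists_cdf_lt ν hp.1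
  obtain ⟨b, hb⟩ := exists_lt_cdf ν hp.2
  obtain ⟨t, ht⟩ := mem_range_of_exists_le_of_exists_ge hc ⟨a, ha.le⟩ ⟨b, hb.le⟩
  set S := {x | cdfOf ν x ≤ p} with hS
  have hcl : IsClosed S := isClosed_le hc continuous_const
  have hbd : BddAbove S := ⟨b, fun x hx => by
    by_contra h
    have := cdfOf_mono ν (not_le.1 h).le
    have hx' : cdfOf ν x ≤ p := hx
    linarith⟩
  have hne : S.Nonempty := ⟨t, ht.le⟩
  have hm : sSup S ∈ S := hcl.csSup_mem hne hbd
  have hSe : S = Iic (sSup S) := by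
    ext x
    exact ⟨fun hx => le_csSup hbd hx, fun hx => (cdfOf_mono ν hx).trans hm⟩
  have hv : cdfOf ν (sSup S) = p := by
    refine le_antisymm hm ?_
    rw [← ht]
    exact cdfOf_mono ν (le_csSup hbd ht.le)
  rw [hSe, ← ofReal_cdfOf, hv]

lemma ae_mem (ν : Measure ℝ) [IsProbabilityMeasure ν] (hc : Continuous (cdfOf ν)) :
    ∀ᵐ x ∂ν, cdfOf ν x ∈ Ioo (0:ℝ) 1 := by
  have h0 : ∀ᵐ x ∂ν, 0 < cdfOf ν x := by
    rw [ae_iff]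
    refine le_antisymm (le_of_forall_gt fun e he => ?_) bot_le
    obtain ⟨p, hp0, hpe⟩ : ∃ p : ℝ, p ∈ Ioo (0:ℝ) 1 ∧ ENNReal.ofReal p < e := by
      obtain ⟨r, hr0, hre⟩ := ENNReal.lt_iff_exists_nnreal_btwn.1 he
      refine ⟨min r (1/2), ⟨lt_min (by exact_mod_cast hr0) (by norm_num), 
        (min_le_right _ _).trans_lt (by norm_num)⟩, ?_⟩
      refine lt_of_le_of_lt (ENNReal.ofReal_le_ofReal (min_le_left _ _)) ?_
      simpa using hre
    refine lt_of_le_of_lt (measure_mono ?_) ((level ν hc hp0).trans_lt hpe)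
    intro x hx
    exact (not_lt.1 hx).trans hp0.1.le
  have h1 : ∀ᵐ x ∂ν, cdfOf ν x < 1 := by
    have hms : MeasurableSet {x | cdfOf ν x < 1} := (isOpen_lt hc continuous_const).measurableSet
    refine (prob_compl_eq_zero_iff hms).2 ?_
    refine le_antisymm prob_le_one (le_of_forall_lt fun e he => ?_)
    obtain ⟨p, hp0, hpe⟩ : ∃ p : ℝ, p ∈ Ioo (0:ℝ) 1 ∧ e < ENNReal.ofReal p := by
      obtain ⟨r, hr0, hre⟩ := ENNReal.lt_iff_exists_nnreal_btwn.1 he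
      have : (0:ENNReal) < r := bot_le.trans_lt hr0
      refine ⟨r, ⟨by exact_mod_cast this, by exact_mod_cast hre⟩, ?_⟩
      simpa using hr0
    refine hpe.trans_le ((level ν hc hp0).symm.le.trans (measure_mono ?_))
    intro x hx
    exact lt_of_le_of_lt hx hp0.2
  filter_upwards [h0, h1] with x a b using ⟨a, b⟩

lemma map_score (ν : Measure ℝ) [IsProbabilityMeasure ν] (hc : Continuous (cdfOf ν)) :
    ν.map (fun x => quantileFn stdNormalCDF (cdfOf ν x)) = gaussianReal 0 1 := by
  have hm : Measurable (fun x => quantileFn stdNormalCDF (cdfOf ν x)) :=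
    q_meas.comp hc.measurable
  have := Measure.isProbabilityMeasure_map (μ := ν) hm.aemeasurable
  refine Measure.ext_of_Iic _ _ fun y => ?_
  rw [Measure.map_apply hm measurableSet_Iic, ← ofReal_cdfOf]
  change _ = ENNReal.ofReal (stdNormalCDF y)
  rw [← level ν hc (Phi_mem y)]
  refine measure_congr ?_
  filter_upwards [ae_mem ν hc] with x hx
  exact propext (q_le hx y)

lemma gauss_moments {Ω : Type*} [MeasurableSpace Ω] (μ : Measure Ω) (Y : Ω → ℝ)
    (hY : AEMeasurable Y μ) (h : μ.map Y = gaussianReal 0 1) :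
    MemLp Y 2 μ ∧ ∫ ω, Y ω ∂μ = 0 ∧ variance Y μ = 1 ∧ ∫ ω, Y ω * Y ω ∂μ = 1 := by
  have h1 : MemLp Y 2 μ := by
    have := memLp_id_gaussianReal (μ := 0) (v := 1) 2
    rw [← h] at this
    exact (memLp_map_measure_iff aestronglyMeasurable_id hY).1 this
  have h2 : ∫ ω, Y ω ∂μ = 0 := by
    have := integral_id_gaussianReal (μ := 0) (v := 1)
    rw [← h, integral_map hY (by fun_prop)] at this
    exact this
  have h3 : variance Y μ = 1 := by
    have := variance_id_gaussianReal (μ := 0) (v := 1)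
    rw [← h, variance_map aemeasurable_id hY] at this
    simpa using this
  refine ⟨h1, h2, h3, ?_⟩
  have := variance_of_integral_eq_zero hY h2
  rw [h3] at this
  rw [this]
  simp [pow_two]

lemma score_law (d : ℕ) (μ : Measure (Fin d → ℝ)) [IsProbabilityMeasure μ] (i : Fin d)
    (hc : Continuous (cdfOf (μ.map fun x => x i))) :
    Measurable (vdWScore d μ i) ∧ μ.map (vdWScore d μ i) = gaussianReal 0 1 := by
  have hm : Measurable (fun x => quantileFn stdNormalCDF (cdfOf (μ.map fun x => x i) x)) :=
    q_meas.comp hc.measurable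
  have he : Measurable (fun x : Fin d → ℝ => x i) := measurable_pi_apply i
  have := Measure.isProbabilityMeasure_map (μ := μ) he.aemeasurable
  refine ⟨hm.comp he, ?_⟩
  rw [← map_score _ hc, Measure.map_map hm he]
  rfl

lemma W_sub (d : ℕ) : Wd d ⊆ Pd d := by
  rintro P ⟨μ, hμ, hc, hP⟩
  set Y := fun i => vdWScore d μ i with hY
  have hm : ∀ i, MemLp (Y i) 2 μ ∧ ∫ ω, Y i ω ∂μ = 0 ∧ variance (Y i) μ = 1 ∧
      ∫ ω, Y i ω * Y i ω ∂μ = 1 := fun i => by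
    obtain ⟨h1, h2⟩ := score_law d μ i (hc i)
    exact gauss_moments μ _ h1.aemeasurable h2
  have hP' : ∀ i j, P i j = ∫ ω, Y i ω * Y j ω ∂μ := fun i j => by
    rw [hP i j, pearson]
    change (_ - (∫ ω, Y i ω ∂μ) * (∫ ω, Y j ω ∂μ)) / √(variance (Y i) μ * variance (Y j) μ) = _
    rw [(hm i).2.1, (hm i).2.2.1, (hm j).2.2.1]
    simp
    rfl
  have hint : ∀ i j, Integrable (fun ω => Y i ω * Y j ω) μ := fun i j =>
    (hm i).1.integrable_mul (hm j).1
  have hsym : P.IsSymm := by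
    ext i j
    rw [Matrix.transpose_apply, hP', hP']
    simp only [mul_comm]
  refine ⟨hsym, ?_, ?_, fun i => by rw [hP', (hm i).2.2.2]⟩
  · intro i j
    have a1 := integral_nonneg (μ := μ) (f := fun ω => (Y i ω + Y j ω) * (Y i ω + Y j ω))
      (fun ω => mul_self_nonneg _)
    have a2 := integral_nonneg (μ := μ) (f := fun ω => (Y i ω - Y j ω) * (Y i ω - Y j ω))
      (fun ω => mul_self_nonneg _)
    have e1 : ∫ ω, (Y i ω + Y j ω) * (Y i ω + Y j ω) ∂μ = 2 + 2 * P i j := by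
      have : ∀ ω, (Y i ω + Y j ω) * (Y i ω + Y j ω)
        = (Y i ω * Y i ω + Y j ω * Y j ω) + 2 * (Y i ω * Y j ω) := fun ω => by ring
      simp only [this]
      rw [integral_add (f := fun ω => Y i ω * Y i ω + Y j ω * Y j ω) ((hint i i).add (hint j j)) ((hint i j).const_mul 2),
        integral_add (hint i i) (hint j j), integral_const_mul, (hm i).2.2.2, (hm j).2.2.2, hP']
      ring
    have e2 : ∫ ω, (Y i ω - Y j ω) * (Y i ω - Y j ω) ∂μ = 2 - 2 * P i j := by
      have : ∀ ω, (Y i ω - Y j ω) * (Y i ω - Y j ω)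
        = (Y i ω * Y i ω + Y j ω * Y j ω) - 2 * (Y i ω * Y j ω) := fun ω => by ring
      simp only [this]
      rw [integral_sub (f := fun ω => Y i ω * Y i ω + Y j ω * Y j ω) ((hint i i).add (hint j j)) ((hint i j).const_mul 2),
        integral_add (hint i i) (hint j j), integral_const_mul, (hm i).2.2.2, (hm j).2.2.2, hP']
      ring
    rw [e1] at a1
    rw [e2] at a2
    constructor <;> linarith
  · refine Matrix.PosSemidef.of_dotProduct_mulVec_nonneg (by simpa using hsym) fun x => ?_
    have : star x ⬝ᵥ P.mulVec x = ∫ ω, (∑ i, x i * Y i ω) * (∑ i, x i * Y i ω) ∂μ := by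
      have e : ∀ ω, (∑ i, x i * Y i ω) * (∑ i, x i * Y i ω)
          = ∑ i, ∑ j, (x i * x j) * (Y i ω * Y j ω) := fun ω => by
        rw [Finset.sum_mul_sum]
        refine Finset.sum_congr rfl fun i _ => Finset.sum_congr rfl fun j _ => by ring
      simp only [e]
      rw [integral_finset_sum _ fun i _ => integrable_finset_sum _ fun j _ =>
        (hint i j).const_mul _]
      simp only [dotProduct, Matrix.mulVec, Finset.mul_sum]
      refine Finset.sum_congr rfl fun i _ => ?_
      rw [integral_finset_sum _ fun j _ => (hint i j).const_mul _]
      refine Finset.sum_congr rfl fun j _ => ?_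
      rw [integral_const_mul, hP']
      simp
      ring
    rw [this]
    exact integral_nonneg fun ω => mul_self_nonneg _

lemma z_moments (d : ℕ) (i : Fin d) :
    MemLp (fun z : Fin d → ℝ => z i) 2 (Measure.pi fun _ : Fin d => gaussianReal 0 1) ∧
    ∫ z, z i ∂(Measure.pi fun _ : Fin d => gaussianReal 0 1) = 0 ∧
    ∫ z, z i * z i ∂(Measure.pi fun _ : Fin d => gaussianReal 0 1) = 1 := by
  obtain ⟨h1, h2, -, h3⟩ := gauss_moments (Measure.pi fun _ : Fin d => gaussianReal 0 1)
    (fun z => z i) (measurable_pi_apply i).aemeasurable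
    (measurePreserving_eval (fun _ : Fin d => gaussianReal 0 1) i).map_eq
  exact ⟨h1, h2, h3⟩

lemma z_indep (d : ℕ) :
    iIndepFun (fun i (z : Fin d → ℝ) => z i) (Measure.pi fun _ : Fin d => gaussianReal 0 1) :=
  iIndepFun_pi (X := fun _ ↦ id) (fun _ ↦ aemeasurable_id)

lemma z_cov (d : ℕ) (i j : Fin d) :
    ∫ z, z i * z j ∂(Measure.pi fun _ : Fin d => gaussianReal 0 1) = if i = j then 1 else 0 := by
  split_ifs with h
  · subst h; exact (z_moments d i).2.2
  · have := ((z_indep d).indepFun h).integral_fun_mul_eq_mul_integral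
      (measurable_pi_apply i).aestronglyMeasurable (measurable_pi_apply j).aestronglyMeasurable
    rw [this, (z_moments d i).2.1, zero_mul]

lemma Az_cov (d : ℕ) (A : Matrix (Fin d) (Fin d) ℝ) (i j : Fin d) :
    ∫ z, A.mulVec z i * A.mulVec z j ∂(Measure.pi fun _ : Fin d => gaussianReal 0 1)
      = (A * A.transpose) i j := by
  have hint : ∀ i j, Integrable (fun z : Fin d → ℝ => z i * z j)
      (Measure.pi fun _ : Fin d => gaussianReal 0 1) := fun i j =>
    (z_moments d i).1.integrable_mul (z_moments d j).1
  have e : ∀ z : Fin d → ℝ, A.mulVec z i * A.mulVec z j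
      = ∑ k, ∑ l, (A i k * A j l) * (z k * z l) := fun z => by
    simp only [Matrix.mulVec, dotProduct]
    rw [Finset.sum_mul_sum]
    refine Finset.sum_congr rfl fun i _ => Finset.sum_congr rfl fun j _ => by ring
  simp only [e]
  rw [integral_finset_sum _ fun i _ => integrable_finset_sum _ fun j _ =>
    (hint i j).const_mul _]
  rw [Matrix.mul_apply]
  refine Finset.sum_congr rfl fun k _ => ?_
  rw [integral_finset_sum _ fun l _ => (hint k l).const_mul _]
  simp only [integral_const_mul, z_cov]
  simp

lemma Az_law (d : ℕ) (A : Matrix (Fin d) (Fin d) ℝ) (i : Fin d)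
    (h : (A * A.transpose) i i = 1) :
    (Measure.pi fun _ : Fin d => gaussianReal 0 1).map (fun z => A.mulVec z i)
      = gaussianReal 0 1 := by
  set m := (Measure.pi fun _ : Fin d => gaussianReal 0 1) with hm
  have hG : HasGaussianLaw (fun z : Fin d → ℝ => A.mulVec z i) m := by
    have h1 : ∀ k : Fin d, HasGaussianLaw (fun z : Fin d → ℝ => z k) m := fun k => by
      constructor
      rw [(measurePreserving_eval (fun _ : Fin d => gaussianReal 0 1) k).map_eq]
      infer_instance
    have h2 := (z_indep d).hasGaussianLaw h1
    have h3 := h2.map (ContinuousLinearMap.proj i ∘L (Matrix.toLin' A).toContinuousLinearMap)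
    exact h3
  have h0 : ∫ z, A.mulVec z i ∂m = 0 := by
    simp only [Matrix.mulVec, dotProduct]
    rw [integral_finset_sum]
    · simp only [integral_const_mul, hm, (z_moments d _).2.1]
      simp
    · intro k _
      exact (((z_moments d k).1.integrable one_le_two)).const_mul _
  rw [hG.map_eq_gaussianReal, h0, variance_of_integral_eq_zero hG.aemeasurable h0]
  simp only [pow_two]
  rw [hm, Az_cov, h]
  simp

lemma gauss_margin (d : ℕ) (A : Matrix (Fin d) (Fin d) ℝ) (i : Fin d)
    (h : (A * A.transpose) i i = 1) :
    ((Measure.pi fun _ : Fin d => gaussianReal 0 1).map A.mulVec).map (fun x => x i)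
      = gaussianReal 0 1 := by
  rw [Measure.map_map (measurable_pi_apply i) (by fun_prop)]
  exact Az_law d A i h

lemma gauss_score (d : ℕ) (A : Matrix (Fin d) (Fin d) ℝ) (i : Fin d)
    (h : (A * A.transpose) i i = 1) :
    vdWScore d ((Measure.pi fun _ : Fin d => gaussianReal 0 1).map A.mulVec) i
      = fun x => x i := by
  funext x
  unfold vdWScore
  rw [gauss_margin d A i h]
  exact q_Phi _

open scoped MatrixOrder Matrix.Norms.L2Operator in
lemma psd_factor {d : ℕ} {P : Matrix (Fin d) (Fin d) ℝ} (hP : P.PosSemidef) :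
    ∃ B : Matrix (Fin d) (Fin d) ℝ, P = B.conjTranspose * B := by
  obtain ⟨B, h⟩ := CStarAlgebra.nonneg_iff_eq_star_mul_self.mp hP.nonneg
  exact ⟨B, h⟩

lemma gauss_part (d : ℕ) : ∀ P ∈ Pd d, ∀ A : Matrix (Fin d) (Fin d) ℝ, A * A.transpose = P →
      ∀ i j : Fin d, P i j =
        pearson ((Measure.pi fun _ : Fin d => gaussianReal 0 1).map A.mulVec)
          (vdWScore d ((Measure.pi fun _ : Fin d => gaussianReal 0 1).map A.mulVec) i)
          (vdWScore d ((Measure.pi fun _ : Fin d => gaussianReal 0 1).map A.mulVec) j) := by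
  rintro P hP A rfl i j
  have hd := hP.2.2.2
  have hA : Measurable A.mulVec := by fun_prop
  rw [gauss_score d A i (hd i), gauss_score d A j (hd j), pearson]
  obtain ⟨-, h1, h2, -⟩ := gauss_moments _ (fun x : Fin d → ℝ => x i)
    (measurable_pi_apply i).aemeasurable (gauss_margin d A i (hd i))
  obtain ⟨-, -, h3, -⟩ := gauss_moments _ (fun x : Fin d → ℝ => x j)
    (measurable_pi_apply j).aemeasurable (gauss_margin d A j (hd j))
  rw [h1, h2, h3, integral_map hA.aemeasurable (by fun_prop), Az_cov]
  simp

/-- the set of van der Waerden's matrices coincides with the set of all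
correlation matrices; in particular, any `P ∈ P_d` is attained as the van der Waerden
matrix of the multivariate normal distribution with covariance matrix `P` (realized as
the image of a standard Gaussian vector under any `A` with `A Aᵀ = P`). -/
theorem vdW_matrices_eq_correlation_matrices (d : ℕ) :
    Wd d = Pd d ∧
    ∀ P ∈ Pd d, ∀ A : Matrix (Fin d) (Fin d) ℝ, A * A.transpose = P →
      ∀ i j : Fin d, P i j =
        pearson ((Measure.pi fun _ : Fin d => gaussianReal 0 1).map A.mulVec)
          (vdWScore d ((Measure.pi fun _ : Fin d => gaussianReal 0 1).map A.mulVec) i)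
          (vdWScore d ((Measure.pi fun _ : Fin d => gaussianReal 0 1).map A.mulVec) j) := by
  refine ⟨subset_antisymm (W_sub d) ?_, gauss_part d⟩
  intro P hP
  obtain ⟨B, hB⟩ := psd_factor hP.2.2.1
  have hA : B.transpose * B.transpose.transpose = P := by
    rw [hB, Matrix.transpose_transpose, Matrix.conjTranspose_eq_transpose_of_trivial]
  have hmA : Measurable B.transpose.mulVec := by fun_prop
  refine ⟨(Measure.pi fun _ : Fin d => gaussianReal 0 1).map B.transpose.mulVec,
    Measure.isProbabilityMeasure_map hmA.aemeasurable, fun j => ?_,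
    gauss_part d P hP _ hA⟩
  rw [gauss_margin d _ j (by rw [hA]; exact hP.2.2.2 j)]
  exact Phi_cont
end
end

section
/- For l = 1,…,2^{d−1}, let b(l) = (b1,…,bd) ∈ {0,1}^d be the binary expansion defined by l = 1 + Σ_{j=1}^d bj·2^{d−j} (so b1 = 0), and let π_l be the distribution on {0,1}^d putting mass 1/2 on each of b(l) and 1 − b(l); its correlation matrix is ρ(π_l) with (i,j)-entry 2·1{b_i(l) = b_j(l)} − 1. Then the set P^B_d(1/2) of correlation matrices of random vectors with Bern(1/2) margins equals the convex hull of {ρ(π_l) : l = 1,…,2^{d−1}}, i.e., P^B_d(1/2) = {Σ_{l=1}^{2^{d−1}} α_l ρ(π_l) : α_l ≥ 0, Σ_l α_l = 1}. -/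
open MeasureTheory ProbabilityTheory Set

noncomputable section

/-- The `j`-th digit (`j : Fin d`, 1-indexed position `j+1`) of the binary expansion
`b(l)` determined by `l = 1 + Σ_{j=1}^d b_j 2^{d−j}`; here the argument is `l − 1`,
ranging over `{0, …, 2^{d−1} − 1}`. -/
def bbit (d : ℕ) (l : ℕ) (j : Fin d) : Bool := l.testBit (d - 1 - (j : ℕ))

/-- The correlation matrix `ρ(π_l)` of the two-point distribution `π_l`:
its `(i,j)` entry is `2·1{b_i(l) = b_j(l)} − 1`. -/
def cutMatrix (d : ℕ) (l : ℕ) : Matrix (Fin d) (Fin d) ℝ :=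
  Matrix.of fun i j => if bbit d l i = bbit d l j then (1:ℝ) else -1

/-- The two-point distribution `π_l` putting mass 1/2 on each of `b(l)` and `1 − b(l)`. -/
def piL (d : ℕ) (l : ℕ) : Measure (Fin d → ℝ) :=
  (1/2 : ENNReal) • Measure.dirac (fun j => if bbit d l j then (1:ℝ) else 0) +
    (1/2 : ENNReal) • Measure.dirac (fun j => if bbit d l j then (0:ℝ) else 1)


lemma aux_int_bern (f : ℝ → ℝ) (hf : Measurable f) :
    ∫ y, f y ∂(bern (1/2)) = (f 1 + f 0) / 2 := by
  have h1 : ∀ a : ℝ, Integrable f (Measure.dirac a) := fun a =>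
    integrable_dirac (by simp)
  unfold bern
  rw [integral_add_measure ((h1 1).smul_measure (by simp)) ((h1 0).smul_measure (by simp)),
    integral_smul_measure, integral_smul_measure, integral_dirac, integral_dirac,
    ENNReal.toReal_ofReal (by norm_num), ENNReal.toReal_ofReal (by norm_num)]
  simp only [smul_eq_mul]
  ring

lemma aux_int_marg {d : ℕ} (μ : Measure (Fin d → ℝ)) (j : Fin d)
    (h : μ.map (fun x => x j) = bern (1/2)) (f : ℝ → ℝ) (hf : Measurable f) :
    ∫ x, f (x j) ∂μ = (f 1 + f 0) / 2 := by
  rw [← aux_int_bern f hf, ← h, integral_map (measurable_pi_apply j).aemeasurable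
    hf.aestronglyMeasurable]

lemma aux_pearson {d : ℕ} (μ : Measure (Fin d → ℝ))
    (h : ∀ j, μ.map (fun x => x j) = bern (1/2)) (i j : Fin d) :
    pearson μ (fun x => x i) (fun x => x j) = 4 * (∫ x, x i * x j ∂μ) - 1 := by
  have hE : ∀ j, ∫ x, x j ∂μ = 1/2 := fun j => by
    have := aux_int_marg μ j (h j) (fun y => y) measurable_id
    simpa using this
  have hV : ∀ j, variance (fun x : Fin d → ℝ => x j) μ = 1/4 := fun j => by
    rw [variance_eq_integral (measurable_pi_apply j).aemeasurable, hE j]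
    have := aux_int_marg μ j (h j) (fun y => (y - 1/2)^2) (by fun_prop)
    rw [this]; norm_num
  unfold pearson
  rw [hE, hE, hV, hV, Real.sqrt_mul_self (by norm_num)]
  ring

lemma aux_piL_marg (d l : ℕ) (j : Fin d) :
    (piL d l).map (fun x => x j) = bern (1/2) := by
  have h2 : ENNReal.ofReal (1/2) = 1/2 := by
    rw [ENNReal.ofReal_div_of_pos (by norm_num)]; simp
  have h3 : ENNReal.ofReal (1 - 1/2) = 1/2 := by
    rw [← h2]; norm_num
  unfold piL bern
  rw [h2, h3, Measure.map_add _ _ (measurable_pi_apply j), Measure.map_smul, Measure.map_smul,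
    Measure.map_dirac' (measurable_pi_apply j), Measure.map_dirac' (measurable_pi_apply j)]
  cases bbit d l j
  · simp [add_comm]
  · simp

lemma aux_int_dirac {d : ℕ} (i j : Fin d) (a : Fin d → ℝ) :
    Integrable (fun x : Fin d → ℝ => x i * x j) (Measure.dirac a) :=
  integrable_dirac (by exact enorm_lt_top)

lemma aux_piL_integrable (d l : ℕ) (i j : Fin d) :
    Integrable (fun x : Fin d → ℝ => x i * x j) (piL d l) :=
  ((aux_int_dirac i j _).smul_measure (by simp)).add_measure
    ((aux_int_dirac i j _).smul_measure (by simp))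

lemma aux_piL_int (d l : ℕ) (i j : Fin d) :
    ∫ x, x i * x j ∂(piL d l) = (cutMatrix d l i j + 1) / 4 := by
  unfold piL cutMatrix
  rw [integral_add_measure ((aux_int_dirac i j _).smul_measure (by simp))
    ((aux_int_dirac i j _).smul_measure (by simp)),
    integral_smul_measure, integral_smul_measure, integral_dirac, integral_dirac]
  simp only [Matrix.of_apply]
  cases bbit d l i <;> cases bbit d l j <;> simp <;> norm_num

lemma aux_index (d : ℕ) (b : Fin d → Bool) :
    ∃ l : Fin (2^(d-1)), ∀ i j, (bbit d l i = bbit d l j ↔ b i = b j) := by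
  rcases d with _ | n
  · exact ⟨⟨0, by simp⟩, fun i => i.elim0⟩
  · let f : Fin n → Bool := fun k => b ⟨n - k, by omega⟩ ^^ b 0
    refine ⟨⟨Nat.ofBits f, Nat.ofBits_lt_two_pow f⟩, ?_⟩
    have key : ∀ j : Fin (n+1), bbit (n+1) (Nat.ofBits f) j = (b j ^^ b 0) := by
      intro j
      unfold bbit
      by_cases hj : j = 0
      · subst hj
        simp [Nat.testBit_ofBits_ge]
      · have hj' : (j : ℕ) ≠ 0 := fun h => hj (Fin.ext h)
        have hlt := j.isLt
        rw [Nat.testBit_ofBits_lt f _ (by omega)]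
        have : (⟨n - (n + 1 - 1 - (j : ℕ)), by omega⟩ : Fin (n+1)) = j := Fin.ext (by
          simp; omega)
        simp only [f, this]
    intro i j
    simp only [key]
    cases b i <;> cases b j <;> cases b 0 <;> simp

lemma aux_ae01 {d : ℕ} (μ : Measure (Fin d → ℝ)) 
    (h : ∀ j, μ.map (fun x => x j) = bern (1/2)) : ∀ᵐ x ∂μ, ∀ j, x j = 0 ∨ x j = 1 := by
  rw [ae_all_iff]
  intro j
  have hm : MeasurableSet {y : ℝ | y = 0 ∨ y = 1} :=
    (measurableSet_singleton (0:ℝ)).union (measurableSet_singleton 1)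
  have : ∀ᵐ y ∂(μ.map (fun x => x j)), y = 0 ∨ y = 1 := by
    rw [h j, ae_iff]
    have : MeasurableSet {y : ℝ | ¬ (y = 0 ∨ y = 1)} := hm.compl
    simp [bern, Measure.dirac_apply' _ this]
  exact (ae_map_iff (measurable_pi_apply j).aemeasurable hm).1 this

/-- the correlation matrix of `π_l` has entries `2·1{b_i(l)=b_j(l)} − 1`,
and `P^B_d(1/2)` is exactly the convex hull of the matrices `ρ(π_l)`,
`l = 1, …, 2^{d−1}`. -/
theorem bernoulli_corr_matrices_eq_convex_hull_of_cut_matrices (d : ℕ) :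
    (∀ l : Fin (2^(d-1)), ∀ i j : Fin d,
        pearson (piL d (l : ℕ)) (fun x => x i) (fun x => x j) = cutMatrix d (l : ℕ) i j) ∧
    PBd d = {P | ∃ α : Fin (2^(d-1)) → ℝ, (∀ l, 0 ≤ α l) ∧ (∑ l, α l = 1) ∧
        P = ∑ l, α l • cutMatrix d (l : ℕ)} := by
  refine ⟨fun l i j => ?_, ?_⟩
  · rw [aux_pearson _ (fun j => aux_piL_marg d l j), aux_piL_int]; ring
  ext P
  constructor
  · rintro ⟨μ, hμ, hm, hP⟩
    choose g hg using aux_index d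
    let L : (Fin d → ℝ) → Fin (2^(d-1)) := fun x => g (fun j => decide (x j = 1))
    have hL : Measurable L := by
      refine (measurable_of_finite g).comp (measurable_pi_lambda _ fun j => ?_)
      refine measurable_to_bool ?_
      have : (fun x : Fin d → ℝ => decide (x j = 1)) ⁻¹' {true} = (fun x => x j) ⁻¹' {1} := by
        ext x; simp
      rw [this]
      exact measurable_pi_apply j (measurableSet_singleton 1)
    have hpm : IsProbabilityMeasure (μ.map L) := Measure.isProbabilityMeasure_map hL.aemeasurable
    refine ⟨fun l => (μ.map L).real {l}, fun l => measureReal_nonneg, ?_, ?_⟩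
    · simp
    · ext i j
      rw [hP, aux_pearson μ hm]
      have hae := aux_ae01 μ hm
      have hI : ∀ j, Integrable (fun x : Fin d → ℝ => x j) μ := fun j => by
        refine Integrable.of_bound (measurable_pi_apply j).aestronglyMeasurable 1 ?_
        filter_upwards [hae] with x hx
        rcases hx j with h | h <;> simp [h]
      have hIJ : Integrable (fun x : Fin d → ℝ => x i * x j) μ := by
        refine Integrable.of_bound (Measurable.aestronglyMeasurable (by fun_prop)) 1 ?_
        filter_upwards [hae] with x hx
        rcases hx i with h | h <;> rcases hx j with h' | h' <;> simp [h, h']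
      have hE : ∀ j, ∫ x, x j ∂μ = 1/2 := fun j => by
        have := aux_int_marg μ j (hm j) (fun y => y) measurable_id
        simpa using this
      have h3 : ∫ x, (4 * (x i * x j) - (2 * x i + 2 * x j) + 1) ∂μ
          = 4 * (∫ x, x i * x j ∂μ) - 1 := by
        have e1 : Integrable (fun x : Fin d → ℝ => 2 * x i + 2 * x j) μ :=
          ((hI i).const_mul 2).add ((hI j).const_mul 2)
        have e2 : Integrable (fun x : Fin d → ℝ => 4 * (x i * x j) - (2 * x i + 2 * x j)) μ :=
          (hIJ.const_mul 4).sub e1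
        rw [integral_add e2 (integrable_const _), integral_sub (hIJ.const_mul 4) e1,
          integral_add ((hI i).const_mul 2) ((hI j).const_mul 2)]
        simp only [integral_const_mul, hE]
        simp
        ring
      have h1 : ∫ l, cutMatrix d (Fin.val l) i j ∂(μ.map L)
          = ∫ x, (4 * (x i * x j) - (2 * x i + 2 * x j) + 1) ∂μ := by
        rw [integral_map hL.aemeasurable (measurable_of_finite _).aestronglyMeasurable]
        refine integral_congr_ae ?_
        filter_upwards [hae] with x hx
        simp only [cutMatrix, Matrix.of_apply, L, hg]
        rcases hx i with h | h <;> rcases hx j with h' | h' <;> simp [h, h'] <;> norm_num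
      rw [← h3, ← h1, integral_fintype (Integrable.of_finite)]
      simp only [Matrix.sum_apply, Matrix.smul_apply, smul_eq_mul]
  · rintro ⟨α, h0, h1, rfl⟩
    let μ : Measure (Fin d → ℝ) := ∑ l : Fin (2^(d-1)), ENNReal.ofReal (α l) • piL d (l : ℕ)
    have hs : ∑ l, ENNReal.ofReal (α l) = 1 := by
      rw [← ENNReal.ofReal_sum_of_nonneg fun l _ => h0 l, h1, ENNReal.ofReal_one]
    have hm : ∀ j, μ.map (fun x => x j) = bern (1/2) := by
      intro j
      have : μ.map (fun x => x j) = ∑ l : Fin (2^(d-1)), ENNReal.ofReal (α l) • bern (1/2) := by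
        simp only [μ]
        rw [← Measure.mapₗ_apply_of_measurable (measurable_pi_apply j), map_sum]
        refine Finset.sum_congr rfl fun l _ => ?_
        rw [Measure.mapₗ_apply_of_measurable (measurable_pi_apply j), Measure.map_smul,
          aux_piL_marg]
      rw [this, ← Finset.sum_smul, hs, one_smul]
    refine ⟨μ, ⟨?_⟩, hm, fun i j => ?_⟩
    · have : ∀ l, piL d l univ = 1 := fun l => by
        simp [piL, ENNReal.inv_two_add_inv_two]
      simp [μ, this, hs]
    · rw [aux_pearson μ hm]
      simp only [μ]
      rw [integral_finsetSum_measure fun (l : Fin (2^(d-1))) _ =>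
        (aux_piL_integrable d l i j).smul_measure (ENNReal.ofReal_ne_top (r := α l))]
      simp only [integral_smul_measure, aux_piL_int, Matrix.sum_apply, Matrix.smul_apply,
        smul_eq_mul, ENNReal.toReal_ofReal (h0 _)]
      rw [Finset.mul_sum]
      nth_rewrite 2 [← h1]
      rw [← Finset.sum_sub_distrib]
      exact Finset.sum_congr rfl fun l _ => by ring
end
end

section
/- A symmetric matrix P = (ρ_{ij}) ∈ [−1,1]^{3×3} with unit diagonal is the correlation matrix of some random vector with Bern(1/2) margins if and only if −1 ≤ ρ_{12} + ρ_{13} + ρ_{23} ≤ 1 + 2·min{ρ_{12}, ρ_{13}, ρ_{23}}. In particular, the 3×3 equicorrelation matrix with off-diagonal entry ρ is such a correlation matrix if and only if −1/3 ≤ ρ ≤ 1, whereas it is positive semi-definite if and only if −1/2 ≤ ρ ≤ 1. -/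
open MeasureTheory ProbabilityTheory Set

noncomputable section

/-- The 3×3 equicorrelation matrix with off-diagonal entry `ρ`. -/
def equicorr3 (ρ : ℝ) : Matrix (Fin 3) (Fin 3) ℝ :=
  Matrix.of fun i j => if i = j then (1:ℝ) else ρ


lemma bern_integral (f : ℝ → ℝ) : ∫ x, f x ∂(bern (1/2)) = (f 1 + f 0) / 2 := by
  unfold bern
  have h : ∀ (c : ℝ) (a : ℝ), Integrable f (ENNReal.ofReal c • Measure.dirac a) := fun c a =>
    (integrable_dirac (by simp [enorm_lt_top])).smul_measure ENNReal.ofReal_ne_top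
  rw [integral_add_measure (h _ _) (h _ _), integral_smul_measure, integral_smul_measure,
    integral_dirac, integral_dirac, ENNReal.toReal_ofReal (by norm_num),
    ENNReal.toReal_ofReal (by norm_num)]
  simp only [smul_eq_mul]
  ring

lemma marg_integral {μ : Measure (Fin 3 → ℝ)} {j : Fin 3}
    (h : μ.map (fun x => x j) = bern (1/2)) (f : ℝ → ℝ) (hf : Measurable f) :
    ∫ x, f (x j) ∂μ = (f 1 + f 0) / 2 := by
  rw [← bern_integral, ← h, integral_map (measurable_pi_apply j).aemeasurable hf.aestronglyMeasurable]

lemma marg_ae {μ : Measure (Fin 3 → ℝ)} {j : Fin 3}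
    (h : μ.map (fun x => x j) = bern (1/2)) : ∀ᵐ x ∂μ, x j = 1 ∨ x j = 0 := by
  have h2 : ∀ᵐ y ∂(μ.map (fun x : Fin 3 → ℝ => x j)), y = 1 ∨ y = 0 := by
    rw [h]
    unfold bern
    rw [ae_add_measure_iff]
    constructor
    · apply Measure.ae_smul_measure
      simp [ae_dirac_eq]
    · apply Measure.ae_smul_measure
      simp [ae_dirac_eq]
  exact ae_of_ae_map (measurable_pi_apply j).aemeasurable h2

lemma marg_pearson {μ : Measure (Fin 3 → ℝ)} [IsProbabilityMeasure μ] {i j : Fin 3}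
    (hi : μ.map (fun x => x i) = bern (1/2)) (hj : μ.map (fun x => x j) = bern (1/2)) :
    pearson μ (fun x => x i) (fun x => x j) = 4 * (∫ x, x i * x j ∂μ) - 1 := by
  have hm : ∀ k : Fin 3, μ.map (fun x => x k) = bern (1/2) → ∫ x, x k ∂μ = 1 / 2 := by
    intro k hk
    have := marg_integral hk (fun y => y) measurable_id
    simpa using this
  have hv : ∀ k : Fin 3, μ.map (fun x => x k) = bern (1/2) →
      variance (fun x : Fin 3 → ℝ => x k) μ = 1 / 4 := by
    intro k hk
    rw [variance_eq_integral (measurable_pi_apply k).aemeasurable, hm k hk]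
    have := marg_integral hk (fun y => (y - 1/2)^2) (by fun_prop)
    rw [this]
    norm_num
  unfold pearson
  rw [hm i hi, hm j hj, hv i hi, hv j hj, Real.sqrt_mul_self (by norm_num)]
  ring

lemma necc {P : Matrix (Fin 3) (Fin 3) ℝ} (hP : P ∈ PBd 3) :
    (-1 ≤ P 0 1 + P 0 2 + P 1 2 ∧
          P 0 1 + P 0 2 + P 1 2 ≤ 1 + 2 * min (min (P 0 1) (P 0 2)) (P 1 2)) := by
  obtain ⟨μ, hμ, hm, hc⟩ := hP
  have hI : ∀ i j : Fin 3, Integrable (fun x : Fin 3 → ℝ => x i * x j) μ := by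
    intro i j
    refine Integrable.of_bound (C := 1) (by fun_prop) ?_
    filter_upwards [marg_ae (hm i), marg_ae (hm j)] with x h1 h2
    rcases h1 with h1 | h1 <;> rcases h2 with h2 | h2 <;> simp [h1, h2]
  have key : ∀ a b c : ℝ, ∀ d : ℝ, (∀ x y z : ℝ, (x = 1 ∨ x = 0) → (y = 1 ∨ y = 0) →
      (z = 1 ∨ z = 0) → 0 ≤ a * (4*(x * y)-2*x-2*y+1) + b * (4*(x * z)-2*x-2*z+1)
        + c * (4*(y * z)-2*y-2*z+1) + d) →
      0 ≤ a * P 0 1 + b * P 0 2 + c * P 1 2 + d := by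
    intro a b c d h
    have hJ : ∀ i : Fin 3, Integrable (fun x : Fin 3 → ℝ => x i) μ := by
      intro i
      refine Integrable.of_bound (C := 1) (measurable_pi_apply i).aestronglyMeasurable ?_
      filter_upwards [marg_ae (hm i)] with x h1
      rcases h1 with h1 | h1 <;> simp [h1]
    have hE : ∀ i : Fin 3, ∫ x, x i ∂μ = 1 / 2 := by
      intro i
      simpa using marg_integral (hm i) (fun y => y) measurable_id
    have hK : ∀ i j : Fin 3, Integrable (fun x : Fin 3 → ℝ => 4*(x i * x j)-2*x i-2*x j+1) μ :=
      fun i j => ((((hI i j).const_mul 4).sub ((hJ i).const_mul 2)).sub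
        ((hJ j).const_mul 2)).add (integrable_const 1)
    have hL : ∀ i j : Fin 3, ∫ x, (4*(x i * x j)-2*x i-2*x j+1) ∂μ = P i j := by
      intro i j
      have I2 : Integrable (fun x : Fin 3 → ℝ => 4*(x i * x j)-2*x i) μ :=
        ((hI i j).const_mul 4).sub ((hJ i).const_mul 2)
      have I1 : Integrable (fun x : Fin 3 → ℝ => 4*(x i * x j)-2*x i-2*x j) μ :=
        I2.sub ((hJ j).const_mul 2)
      rw [hc, marg_pearson (hm i) (hm j), integral_add I1 (integrable_const 1),
        integral_sub I2 ((hJ j).const_mul 2),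
        integral_sub ((hI i j).const_mul 4) ((hJ i).const_mul 2),
        integral_const_mul, integral_const_mul, integral_const_mul, hE, hE]
      simp
    have h0 : 0 ≤ ∫ x, (a * (4*(x 0 * x 1)-2*x 0-2*x 1+1) + b * (4*(x 0 * x 2)-2*x 0-2*x 2+1)
        + c * (4*(x 1 * x 2)-2*x 1-2*x 2+1) + d) ∂μ := by
      apply integral_nonneg_of_ae
      filter_upwards [marg_ae (hm 0), marg_ae (hm 1), marg_ae (hm 2)] with x h1 h2 h3
      exact h _ _ _ h1 h2 h3
    have I2 : Integrable (fun x : Fin 3 → ℝ => a * (4*(x 0 * x 1)-2*x 0-2*x 1+1)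
        + b * (4*(x 0 * x 2)-2*x 0-2*x 2+1)) μ :=
      ((hK 0 1).const_mul a).add ((hK 0 2).const_mul b)
    have I1 : Integrable (fun x : Fin 3 → ℝ => a * (4*(x 0 * x 1)-2*x 0-2*x 1+1)
        + b * (4*(x 0 * x 2)-2*x 0-2*x 2+1) + c * (4*(x 1 * x 2)-2*x 1-2*x 2+1)) μ :=
      I2.add ((hK 1 2).const_mul c)
    rw [integral_add I1 (integrable_const d), integral_add I2 ((hK 1 2).const_mul c),
      integral_add ((hK 0 1).const_mul a) ((hK 0 2).const_mul b),
      integral_const_mul, integral_const_mul, integral_const_mul, hL, hL, hL] at h0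
    simpa using h0
  have k0 := key 1 1 1 1 (by
    rintro x y z (rfl | rfl) (rfl | rfl) (rfl | rfl) <;> norm_num)
  have k1 := key 1 (-1) (-1) 1 (by
    rintro x y z (rfl | rfl) (rfl | rfl) (rfl | rfl) <;> norm_num)
  have k2 := key (-1) 1 (-1) 1 (by
    rintro x y z (rfl | rfl) (rfl | rfl) (rfl | rfl) <;> norm_num)
  have k3 := key (-1) (-1) 1 1 (by
    rintro x y z (rfl | rfl) (rfl | rfl) (rfl | rfl) <;> norm_num)
  refine ⟨by linarith, ?_⟩
  have : (P 0 1 + P 0 2 + P 1 2 - 1) / 2 ≤ min (min (P 0 1) (P 0 2)) (P 1 2) :=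
    le_min (le_min (by linarith) (by linarith)) (by linarith)
  linarith

/-- antipodal pair -/
def pairM (q : ℝ) (v : Fin 3 → ℝ) : Measure (Fin 3 → ℝ) :=
  ENNReal.ofReal q • (Measure.dirac v + Measure.dirac (fun i => 1 - v i))

lemma pairM_map (q : ℝ) (v : Fin 3 → ℝ) (j : Fin 3) (hv : v j = 1 ∨ v j = 0) :
    (pairM q v).map (fun x => x j) =
      ENNReal.ofReal q • (Measure.dirac (1:ℝ) + Measure.dirac (0:ℝ)) := by
  have hmj : Measurable (fun x : Fin 3 → ℝ => x j) := by fun_prop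
  unfold pairM
  rw [Measure.map_smul, Measure.map_add _ _ hmj, Measure.map_dirac' hmj, Measure.map_dirac' hmj]
  rcases hv with h | h
  · simp [h]
  · simp [h, add_comm]

lemma pairM_integrable (q : ℝ) (v : Fin 3 → ℝ) (f : (Fin 3 → ℝ) → ℝ) :
    Integrable f (pairM q v) := by
  unfold pairM
  exact ((integrable_dirac (by simp [enorm_lt_top])).add_measure
    (integrable_dirac (by simp [enorm_lt_top]))).smul_measure ENNReal.ofReal_ne_top

lemma pairM_integral (q : ℝ) (hq : 0 ≤ q) (v : Fin 3 → ℝ) (f : (Fin 3 → ℝ) → ℝ) :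
    ∫ x, f x ∂(pairM q v) = q * (f v + f (fun i => 1 - v i)) := by
  unfold pairM
  rw [integral_smul_measure, integral_add_measure (integrable_dirac (by simp [enorm_lt_top]))
    (integrable_dirac (by simp [enorm_lt_top])), integral_dirac, integral_dirac,
    ENNReal.toReal_ofReal hq, smul_eq_mul]

lemma suff {P : Matrix (Fin 3) (Fin 3) ℝ} (hs : P.IsSymm) (hd : ∀ i, P i i = 1)
    (h1 : -1 ≤ P 0 1 + P 0 2 + P 1 2)
    (h2 : P 0 1 + P 0 2 + P 1 2 ≤ 1 + 2 * min (min (P 0 1) (P 0 2)) (P 1 2)) : P ∈ PBd 3 := by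
  have m1 : min (min (P 0 1) (P 0 2)) (P 1 2) ≤ P 0 1 := (min_le_left _ _).trans (min_le_left _ _)
  have m2 : min (min (P 0 1) (P 0 2)) (P 1 2) ≤ P 0 2 := (min_le_left _ _).trans (min_le_right _ _)
  have m3 : min (min (P 0 1) (P 0 2)) (P 1 2) ≤ P 1 2 := min_le_right _ _
  obtain ⟨q0, e0⟩ : ∃ q, q = (1 + P 0 1 + P 0 2 + P 1 2) / 8 := ⟨_, rfl⟩
  obtain ⟨q1, e1⟩ : ∃ q, q = (1 - P 0 1 - P 0 2 + P 1 2) / 8 := ⟨_, rfl⟩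
  obtain ⟨q2, e2⟩ : ∃ q, q = (1 - P 0 1 + P 0 2 - P 1 2) / 8 := ⟨_, rfl⟩
  obtain ⟨q3, e3⟩ : ∃ q, q = (1 + P 0 1 - P 0 2 - P 1 2) / 8 := ⟨_, rfl⟩
  have p0 : 0 ≤ q0 := by linarith
  have p1 : 0 ≤ q1 := by linarith
  have p2 : 0 ≤ q2 := by linarith
  have p3 : 0 ≤ q3 := by linarith
  let μ : Measure (Fin 3 → ℝ) :=
    pairM q0 ![1,1,1] + pairM q1 ![0,1,1] + pairM q2 ![1,0,1] + pairM q3 ![1,1,0]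
  have hm : ∀ j, μ.map (fun x => x j) = bern (1/2) := by
    intro j
    have hmj : Measurable (fun x : Fin 3 → ℝ => x j) := by fun_prop
    simp only [μ]
    rw [Measure.map_add _ _ hmj, Measure.map_add _ _ hmj, Measure.map_add _ _ hmj,
      pairM_map, pairM_map, pairM_map, pairM_map, ← add_smul, ← add_smul, ← add_smul,
      ← ENNReal.ofReal_add p0 p1, ← ENNReal.ofReal_add (by positivity) p2,
      ← ENNReal.ofReal_add (by positivity) p3]
    · have : q0 + q1 + q2 + q3 = 1 / 2 := by linarith
      rw [this, smul_add, bern]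
      norm_num
    all_goals fin_cases j <;> simp
  have hp : IsProbabilityMeasure μ := by
    constructor
    have hmj : Measurable (fun x : Fin 3 → ℝ => x 0) := by fun_prop
    have h : (μ.map (fun x => x 0)) univ = bern (1/2) univ := by rw [hm]
    rw [Measure.map_apply hmj MeasurableSet.univ, preimage_univ] at h
    rw [h]
    simp only [bern, Measure.add_apply, Measure.smul_apply, measure_univ, smul_eq_mul, mul_one]
    rw [← ENNReal.ofReal_add (by norm_num) (by norm_num)]
    norm_num
  refine ⟨μ, hp, hm, ?_⟩
  intro i j
  rw [marg_pearson (hm i) (hm j)]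
  simp only [μ]
  rw [integral_add_measure (((pairM_integrable _ _ _).add_measure
      (pairM_integrable _ _ _)).add_measure (pairM_integrable _ _ _)) (pairM_integrable _ _ _),
    integral_add_measure ((pairM_integrable _ _ _).add_measure
      (pairM_integrable _ _ _)) (pairM_integrable _ _ _),
    integral_add_measure (pairM_integrable _ _ _) (pairM_integrable _ _ _),
    pairM_integral _ p0, pairM_integral _ p1, pairM_integral _ p2, pairM_integral _ p3]
  have s1 := hs.apply 0 1
  have s2 := hs.apply 0 2
  have s3 := hs.apply 1 2
  have d0 := hd 0
  have d1 := hd 1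
  have d2 := hd 2
  fin_cases i <;> fin_cases j <;> simp <;> linarith

lemma equi_psd (ρ : ℝ) : (equicorr3 ρ).PosSemidef ↔ (-(1/2) ≤ ρ ∧ ρ ≤ 1) := by
  rw [Matrix.posSemidef_iff_dotProduct_mulVec]
  constructor
  · rintro ⟨-, h⟩
    have a := h ![1,1,1]
    have b := h ![1,-1,0]
    simp [equicorr3, Matrix.mulVec, dotProduct, Fin.sum_univ_three] at a b
    constructor <;> linarith
  · rintro ⟨h1, h2⟩
    constructor
    · ext i j
      simp [equicorr3, eq_comm]
    · intro x
      simp [equicorr3, Matrix.mulVec, dotProduct, Fin.sum_univ_three]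
      nlinarith [mul_nonneg (sub_nonneg.2 h2) (add_nonneg (add_nonneg (sq_nonneg (x 0 - x 1))
        (sq_nonneg (x 0 - x 2))) (sq_nonneg (x 1 - x 2))),
        mul_nonneg (by linarith : 0 ≤ 1 + 2 * ρ) (sq_nonneg (x 0 + x 1 + x 2))]

/-- a symmetric 3×3 matrix with unit diagonal and entries in `[-1,1]` is
the correlation matrix of a random vector with `Bern(1/2)` margins iff
`−1 ≤ ρ12 + ρ13 + ρ23 ≤ 1 + 2·min{ρ12, ρ13, ρ23}`. In particular, the 3×3
equicorrelation matrix lies in `P^B_3(1/2)` iff `−1/3 ≤ ρ ≤ 1`, while it is positive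
semi-definite iff `−1/2 ≤ ρ ≤ 1`. -/
theorem bernoulli_compatibility_dim3 :
    (∀ P : Matrix (Fin 3) (Fin 3) ℝ, P.IsSymm →
      (∀ i j, P i j ∈ Set.Icc (-1:ℝ) 1) → (∀ i, P i i = 1) →
      (P ∈ PBd 3 ↔
        (-1 ≤ P 0 1 + P 0 2 + P 1 2 ∧
          P 0 1 + P 0 2 + P 1 2 ≤ 1 + 2 * min (min (P 0 1) (P 0 2)) (P 1 2)))) ∧
    (∀ ρ : ℝ,
      (equicorr3 ρ ∈ PBd 3 ↔ (-(1/3) ≤ ρ ∧ ρ ≤ 1)) ∧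
      ((equicorr3 ρ).PosSemidef ↔ (-(1/2) ≤ ρ ∧ ρ ≤ 1))) := by
  refine ⟨fun P hs _ hd => ⟨necc, fun h => suff hs hd h.1 h.2⟩, fun ρ => ⟨⟨?_, ?_⟩, equi_psd ρ⟩⟩
  · intro h
    have := necc h
    simp [equicorr3] at this
    constructor <;> linarith
  · rintro ⟨h1, h2⟩
    apply suff
    · ext i j
      simp [equicorr3, eq_comm]
    · intro i
      simp [equicorr3]
    · simp [equicorr3]
      linarith
    · simp [equicorr3]
      linarith
end
end

section
/- Let P ∈ ℝ^{d×d}, d = d1 + ⋯ + dS, be a positive definite block homogeneous matrix with diagonal blocks (1 − ρ_{ss})I_{ds} + ρ_{ss}J_{ds} and off-diagonal blocks ρ_{s1s2}J_{d_{s1}d_{s2}}. Then the Cholesky factor L of P (the lower triangular matrix with positive diagonal such that P = LLᵀ) has the following block structure: the diagonal blocks L_{ss} are lower triangular ds×ds matrices in which all sub-diagonal entries within each column are equal (i.e., L_{ss} has entries (L_{ss})_{jk} = l_{ss,k} for j > k and (L_{ss})_{jj} = l̃_{ss,j}), and each off-diagonal block L_{s+m,s} (m ≥ 1) has constant columns,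 i.e., L_{s+m,s} = (c_{sm,1}·1_{d_{s+m}}, …, c_{sm,ds}·1_{d_{s+m}}) for some scalars c_{sm,1},…,c_{sm,ds}. -/
open MeasureTheory ProbabilityTheory Set

noncomputable section

/-- The `d×d` block homogeneous matrix with `S` blocks of sizes `ds 0, …, ds (S-1)`
(indexed by the sigma type `(s : Fin S) × Fin (ds s)`): the `(s,s)` diagonal block is
the compound symmetry matrix `(1 − ρ_{ss}) I + ρ_{ss} J` and the `(s₁,s₂)` off-diagonal
block is the constant matrix `ρ_{s₁s₂} J`. -/
def blockMatrix (S : ℕ) (ds : Fin S → ℕ) (ρ : Fin S → Fin S → ℝ) :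
    Matrix ((s : Fin S) × Fin (ds s)) ((s : Fin S) × Fin (ds s)) ℝ :=
  Matrix.of fun i j =>
    if i.1 = j.1 then (if (i.2 : ℕ) = (j.2 : ℕ) then (1:ℝ) else ρ i.1 i.1)
    else ρ i.1 j.1

/-- The block average map `φ(P)`: `φ(P)_{ss} = (1 + (ds − 1) ρ_{ss})/ds` and
`φ(P)_{s₁s₂} = ρ_{s₁s₂}` for `s₁ ≠ s₂`. -/
def blockAvg (S : ℕ) (ds : Fin S → ℕ) (ρ : Fin S → Fin S → ℝ) :
    Matrix (Fin S) (Fin S) ℝ :=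
  Matrix.of fun s t =>
    if s = t then (1 + ((ds s : ℝ) - 1) * ρ s s) / (ds s : ℝ) else ρ s t

/-- The strict "lower triangular" order on the sigma index type of a block matrix:
`i` comes strictly before `j` if its block comes first, or the blocks agree and its
within-block index is smaller. -/
def sigLT {S : ℕ} {ds : Fin S → ℕ} (i j : (s : Fin S) × Fin (ds s)) : Prop :=
  i.1 < j.1 ∨ (i.1 = j.1 ∧ (i.2 : ℕ) < (j.2 : ℕ))

/-- the Cholesky factor `L` (lower triangular with positive diagonal,
`P = L Lᵀ`) of a positive definite block homogeneous matrix `P` has the following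
structure: within each diagonal block all sub-diagonal entries of a given column are
equal, and each off-diagonal block has constant columns. -/
theorem cholesky_factor_of_block_matrix (S : ℕ) (ds : Fin S → ℕ)
    (ρ : Fin S → Fin S → ℝ) (hsym : ∀ s t, ρ s t = ρ t s)
    (hrange : ∀ s t, ρ s t ∈ Set.Icc (-1:ℝ) 1)
    (hPD : (blockMatrix S ds ρ).PosDef)
    (L : Matrix ((s : Fin S) × Fin (ds s)) ((s : Fin S) × Fin (ds s)) ℝ)
    (htri : ∀ i j : (s : Fin S) × Fin (ds s), sigLT i j → L i j = 0)
    (hdiag : ∀ i, 0 < L i i)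
    (hchol : blockMatrix S ds ρ = L * L.transpose) :
    (∀ (s : Fin S) (i i' k : Fin (ds s)), (k : ℕ) < (i : ℕ) → (k : ℕ) < (i' : ℕ) →
        L ⟨s, i⟩ ⟨s, k⟩ = L ⟨s, i'⟩ ⟨s, k⟩) ∧
    (∀ s t : Fin S, s < t → ∀ (k : Fin (ds s)) (j j' : Fin (ds t)),
        L ⟨t, j⟩ ⟨s, k⟩ = L ⟨t, j'⟩ ⟨s, k⟩) := by
  have tri : ∀ a b : (s : Fin S) × Fin (ds s), sigLT a b ∨ a = b ∨ sigLT b a := by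
    rintro ⟨s, i⟩ ⟨t, j⟩
    rcases lt_trichotomy s t with h | h | h
    · exact Or.inl (Or.inl h)
    · subst h
      rcases lt_trichotomy i j with h | h | h
      · exact Or.inl (Or.inr ⟨rfl, h⟩)
      · subst h
        exact Or.inr (Or.inl rfl)
      · exact Or.inr (Or.inr (Or.inr ⟨rfl, h⟩))
    · exact Or.inr (Or.inr (Or.inl h))
  have irr : ∀ a : (s : Fin S) × Fin (ds s), ¬ sigLT a a := by
    rintro a (h | h)
    · exact lt_irrefl _ h
    · exact lt_irrefl _ h.2
  have tr : ∀ a b c : (s : Fin S) × Fin (ds s), sigLT a b → sigLT b c → sigLT a c := by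
    rintro a b c (h | h) (h' | h')
    · exact Or.inl (h.trans h')
    · exact Or.inl (h'.1 ▸ h)
    · exact Or.inl (h.1 ▸ h')
    · exact Or.inr ⟨h.1.trans h'.1, h.2.trans h'.2⟩
  have wf : WellFounded (sigLT (S := S) (ds := ds)) := by
    haveI : IsTrans ((s : Fin S) × Fin (ds s)) sigLT := ⟨tr⟩
    haveI : Std.Irrefl (sigLT (S := S) (ds := ds)) := ⟨irr⟩
    exact Finite.wellFounded_of_trans_of_irrefl _
  have key : ∀ c a b : (s : Fin S) × Fin (ds s), sigLT c a → sigLT c b → a.1 = b.1 →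
      L a c = L b c := by
    intro c
    induction c using wf.induction with
    | _ c ih =>
      intro a b ha hb hab
      have hP : ∀ x : (s : Fin S) × Fin (ds s), sigLT c x →
          blockMatrix S ds ρ x c = ρ x.1 c.1 := by
        rintro x (h | h)
        · simp [blockMatrix, h.ne']
        · simp [blockMatrix, h.1, h.2.ne']
      have e : (L * L.transpose) a c = (L * L.transpose) b c := by
        rw [← hchol, hP a ha, hP b hb, hab]
      simp only [Matrix.mul_apply, Matrix.transpose_apply] at e
      rw [← sub_eq_zero, ← Finset.sum_sub_distrib, Finset.sum_eq_single c] at e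
      · rw [← sub_mul] at e
        rcases mul_eq_zero.mp e with h | h
        · exact sub_eq_zero.mp h
        · exact absurd h (hdiag c).ne'
      · intro x _ hx
        rcases tri x c with h | h | h
        · rw [ih x h a b (tr _ _ _ h ha) (tr _ _ _ h hb) hab, sub_self]
        · exact absurd h hx
        · simp [htri c x h]
      · intro h
        exact absurd (Finset.mem_univ c) h
  exact ⟨fun s i i' k h h' => key _ _ _ (Or.inr ⟨rfl, h⟩) (Or.inr ⟨rfl, h'⟩) rfl,
    fun s t h k j j' => key _ _ _ (Or.inl h) (Or.inl h) rfl⟩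
end
end

section
/- Let P be a d×d block homogeneous correlation matrix with block sizes d1,…,dS, diagonal blocks (1 − ρ_{ss})I_{ds} + ρ_{ss}J_{ds} satisfying −1/(ds − 1) < ρ_{ss} < 1, and off-diagonal blocks ρ_{s1s2}J_{d_{s1}d_{s2}}. Define the S×S matrix M = (m_{kl}) by m_{kk} = 1 and, for k ≠ l, m_{kl} = d_k d_l ρ_{kl} / ((1 + (d_k − 1)ρ_{kk})(1 + (d_l − 1)ρ_{ll})). If M is the Pearson correlation matrix of some S-dimensional random vector with all margins uniform on (0,1), then P is the Pearson correlation matrix of some d-dimensional random vector with all margins uniform on (0,1); moreover such a vector can be constructed explicitly as W_{s} = B_s U_s 1_{ds} + (1 − B_s)V_s, where U = (U1,…,US) has uniform margins and correlation matrix M, the V_s are independent ds-dimensional vectors with uniform margins and correlation matrix Γ_{ds}(1, −1/(ds−1)), B_s ~ Bern(λ_s) with λ_s = (1 + (ds − 1)ρ_{ss})/ds, and U, all V_s, and all B_s are mutually independent. -/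
open MeasureTheory ProbabilityTheory Set

noncomputable section

/-- The `S×S` matrix `M` with `m_{kk} = 1` and
`m_{kl} = d_k d_l ρ_{kl} / ((1 + (d_k − 1)ρ_{kk})(1 + (d_l − 1)ρ_{ll}))` for `k ≠ l`. -/
def corrM (S : ℕ) (ds : Fin S → ℕ) (ρ : Fin S → Fin S → ℝ) : Matrix (Fin S) (Fin S) ℝ :=
  Matrix.of fun k l => if k = l then (1:ℝ) else
    (ds k : ℝ) * (ds l : ℝ) * ρ k l /
      ((1 + ((ds k : ℝ) - 1) * ρ k k) * (1 + ((ds l : ℝ) - 1) * ρ l l))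

/-- `λ_s = (1 + (d_s − 1)ρ_{ss})/d_s`. -/
def lamb (S : ℕ) (ds : Fin S → ℕ) (ρ : Fin S → Fin S → ℝ) (s : Fin S) : ℝ :=
  (1 + ((ds s : ℝ) - 1) * ρ s s) / (ds s : ℝ)

/-- The sample space carrying the independent ingredients `U`, `(V_s)_s`, `(B_s)_s`. -/
abbrev mixSpace (S : ℕ) (ds : Fin S → ℕ) : Type :=
  (Fin S → ℝ) × (((s : Fin S) → (Fin (ds s) → ℝ)) × (Fin S → ℝ))

/-- The joint law of the independent ingredients: `U ~ μU`, `V_s ~ V s` independently,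
and `B_s ~ Bern(λ_s)` independently. -/
def mixMeasure (S : ℕ) (ds : Fin S → ℕ) (ρ : Fin S → Fin S → ℝ)
    (μU : Measure (Fin S → ℝ)) (V : (s : Fin S) → Measure (Fin (ds s) → ℝ)) :
    Measure (mixSpace S ds) :=
  μU.prod ((Measure.pi V).prod (Measure.pi fun s => bern (lamb S ds ρ s)))

/-- The constructed random vector `W_{(s,k)} = B_s U_s + (1 − B_s) V_{s,k}`. -/
def Wfun (S : ℕ) (ds : Fin S → ℕ) (i : (s : Fin S) × Fin (ds s)) (ω : mixSpace S ds) : ℝ :=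
  ω.2.2 i.1 * ω.1 i.1 + (1 - ω.2.2 i.1) * ω.2.1 i.1 i.2

instance unif01_prob : IsProbabilityMeasure unif01 := ⟨by simp [unif01]⟩

lemma unif01_memLp : MemLp (fun x : ℝ => x) 2 unif01 := by
  refine MemLp.of_bound (C := 1) (by fun_prop) ?_
  rw [unif01]
  filter_upwards [ae_restrict_mem measurableSet_Ioo] with x hx
  rw [Real.norm_eq_abs, abs_le]
  constructor <;> linarith [hx.1, hx.2]

lemma unif01_int1 : ∫ x, x ∂unif01 = 1/2 := by
  rw [unif01, ← integral_Ioc_eq_integral_Ioo, ← intervalIntegral.integral_of_le zero_le_one]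
  rw [integral_id]; norm_num

lemma unif01_int2 : ∫ x, x * x ∂unif01 = 1/3 := by
  rw [unif01, ← integral_Ioc_eq_integral_Ioo, ← intervalIntegral.integral_of_le zero_le_one]
  simp_rw [← pow_two]
  rw [integral_pow]; norm_num

section law
variable {Ω : Type*} [MeasurableSpace Ω] {μ : Measure Ω} {X Y : Ω → ℝ}

lemma law_memLp (hX : Measurable X) (h : μ.map X = unif01) : MemLp X 2 μ := by
  have := unif01_memLp
  rw [← h] at this
  exact (memLp_map_measure_iff (by fun_prop) hX.aemeasurable).1 this

lemma law_int1 (hX : Measurable X) (h : μ.map X = unif01) : ∫ ω, X ω ∂μ = 1/2 := by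
  rw [← unif01_int1, ← h, integral_map hX.aemeasurable (by fun_prop)]

lemma law_int2 (hX : Measurable X) (h : μ.map X = unif01) : ∫ ω, X ω * X ω ∂μ = 1/3 := by
  rw [← unif01_int2, ← h, integral_map hX.aemeasurable (by fun_prop)]

lemma law_var [IsProbabilityMeasure μ] (hX : Measurable X) (h : μ.map X = unif01) :
    variance X μ = 1/12 := by
  rw [variance_eq_sub (law_memLp hX h)]
  have h1 := law_int1 hX h
  have h2 := law_int2 hX h
  have : (X ^ 2) = fun ω => X ω * X ω := by ext; simp [pow_two]
  rw [this, h1, h2]; norm_num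

lemma law_pearson [IsProbabilityMeasure μ] (hX : Measurable X) (h : μ.map X = unif01)
    (hY : Measurable Y) (h' : μ.map Y = unif01) :
    pearson μ X Y = 12 * (∫ ω, X ω * Y ω ∂μ) - 3 := by
  rw [pearson, law_var hX h, law_var hY h', law_int1 hX h, law_int1 hY h',
    Real.sqrt_mul_self (by norm_num)]
  ring

end law

/-- base vector -/
def bvec (n : ℕ) (k : Fin (n+1)) (y : ℝ) : ℝ := if (k : ℕ) < n then (y + k) / n else 1 - y

lemma bvec_meas (n : ℕ) (k : Fin (n+1)) : Measurable (bvec n k) := by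
  unfold bvec; split_ifs <;> fun_prop

lemma unif01_Ioc : unif01 = volume.restrict (Ioc (0:ℝ) 1) :=
  Measure.restrict_congr_set Ioo_ae_eq_Ioc

lemma map_refl_unif : unif01.map (fun y => 1 - y) = unif01 := by
  have h := (Measure.measurePreserving_sub_left (volume : Measure ℝ) 1)
  have h2 := h.restrict_preimage (s := Ioo 0 1) measurableSet_Ioo
  have : (fun x : ℝ => 1 - x) ⁻¹' Ioo 0 1 = Ioo 0 1 := by simp
  rw [this] at h2
  exact h2.map_eq

lemma map_aff_unif (n k : ℕ) (hn : 0 < n) : unif01.map (fun y : ℝ => (y + k) / n) =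
    (n : ENNReal) • volume.restrict (Ioc ((k:ℝ)/n) (((k+1 : ℕ):ℝ)/n)) := by
  have hn' : (0:ℝ) < n := by exact_mod_cast hn
  have e : (volume : Measure ℝ).map (fun y : ℝ => (y + k) / n) = (n : ENNReal) • volume := by
    have : (fun y : ℝ => (y + k) / n) = (fun y => y * (n:ℝ)⁻¹) ∘ (fun y => y + (k:ℝ)) := by
      ext; simp [div_eq_mul_inv]
    rw [this, ← Measure.map_map (by fun_prop) (by fun_prop),
      (measurePreserving_add_right (volume : Measure ℝ) (k:ℝ)).map_eq,
      Real.map_volume_mul_right (by positivity)]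
    simp
  rw [← Measure.restrict_smul, ← e, Measure.restrict_map (by fun_prop) measurableSet_Ioc, unif01_Ioc]
  congr 2
  ext y
  simp only [mem_Ioc, mem_preimage, Nat.cast_add, Nat.cast_one]
  rw [div_lt_div_iff_of_pos_right hn', div_le_div_iff_of_pos_right hn']
  constructor <;> rintro ⟨h1, h2⟩ <;> constructor <;> linarith

lemma sum_restrict (n : ℕ) (N : ℕ) :
    ∑ k ∈ Finset.range N, volume.restrict (Ioc ((k:ℝ)/n) (((k+1 : ℕ):ℝ)/n))
     = volume.restrict (Ioc (0:ℝ) ((N:ℝ)/n)) := by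
  induction N with
  | zero => simp
  | succ N ih =>
    rw [Finset.sum_range_succ, ih, ← Measure.restrict_union _ measurableSet_Ioc,
      Ioc_union_Ioc_eq_Ioc (by positivity)]
    · gcongr; simp
    · exact Ioc_disjoint_Ioc_of_le le_rfl

lemma sum_bvec (n : ℕ) (hn : 0 < n) :
    ∑ k : Fin (n+1), unif01.map (bvec n k) = ((n+1 : ℕ) : ENNReal) • unif01 := by
  rw [Fin.sum_univ_castSucc]
  have h1 : ∀ k : Fin n, bvec n k.castSucc = fun y : ℝ => (y + (k:ℕ))/n := by
    intro k; ext y; simp [bvec]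
  have h2 : bvec n (Fin.last n) = fun y => 1 - y := by ext y; simp [bvec]
  simp_rw [h1, h2, map_refl_unif, map_aff_unif n _ hn]
  rw [← Finset.smul_sum, Fin.sum_univ_eq_sum_range (fun k : ℕ =>
    volume.restrict (Ioc ((k:ℝ)/n) (((k+1 : ℕ):ℝ)/n))) n, sum_restrict, div_self (by positivity),
    ← unif01_Ioc]
  push_cast
  rw [add_smul, one_smul]

/-- symmetrized law -/
def symm0 (n : ℕ) : Measure (Fin (n+1) → ℝ) :=
  ((n+1).factorial : ENNReal)⁻¹ • ∑ σ : Equiv.Perm (Fin (n+1)),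
    unif01.map (fun y k => bvec n (σ k) y)

lemma bvec_meas' (n : ℕ) (σ : Equiv.Perm (Fin (n+1))) :
    Measurable (fun y k => bvec n (σ k) y) :=
  measurable_pi_lambda _ fun _ => bvec_meas n _

lemma sum_perm {M : Type*} [AddCommMonoid M] (n : ℕ) (i : Fin (n+1)) (f : Fin (n+1) → M) :
    ∑ σ : Equiv.Perm (Fin (n+1)), f (σ i) = (n.factorial) • ∑ k, f k := by
  have h : ∀ i j : Fin (n+1), ∑ σ : Equiv.Perm (Fin (n+1)), f (σ i) =
      ∑ σ : Equiv.Perm (Fin (n+1)), f (σ j) := by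
    intro i j
    refine Fintype.sum_equiv (Equiv.mulRight (Equiv.swap i j)) _ _ ?_
    intro σ
    simp
  rw [h i 0, ← Equiv.Perm.decomposeFin.symm.sum_comp]
  rw [Fintype.sum_prod_type]
  simp [Fintype.card_perm, Finset.smul_sum]

lemma symm0_prob (n : ℕ) : IsProbabilityMeasure (symm0 n) := by
  constructor
  have : ∀ σ : Equiv.Perm (Fin (n+1)), IsProbabilityMeasure
      (unif01.map (fun y k => bvec n (σ k) y)) := fun σ =>
    Measure.isProbabilityMeasure_map (bvec_meas' n σ).aemeasurable
  simp [symm0, Fintype.card_perm]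
  exact ENNReal.inv_mul_cancel (by positivity) (ENNReal.natCast_ne_top _)

lemma symm0_law (n : ℕ) (hn : 0 < n) (i : Fin (n+1)) :
    (symm0 n).map (fun v => v i) = unif01 := by
  rw [symm0, Measure.map_smul, Measure.map_finset_sum (measurable_pi_apply i).aemeasurable]
  have : ∀ σ : Equiv.Perm (Fin (n+1)), (unif01.map (fun y k => bvec n (σ k) y)).map
      (fun v => v i) = unif01.map (bvec n (σ i)) := by
    intro σ
    rw [Measure.map_map (by fun_prop) (bvec_meas' n σ)]
    rfl
  simp_rw [this]
  rw [sum_perm n i (fun k => unif01.map (bvec n k)), sum_bvec n hn]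
  rw [← Nat.cast_smul_eq_nsmul ENNReal, smul_smul, smul_smul]
  have : ((n+1).factorial : ENNReal)⁻¹ * ((n.factorial : ENNReal) * ((n+1:ℕ):ENNReal)) = 1 := by
    rw [← Nat.cast_mul, mul_comm n.factorial, ← Nat.factorial_succ]
    exact ENNReal.inv_mul_cancel (by exact_mod_cast Nat.factorial_ne_zero _)
      (ENNReal.natCast_ne_top _)
  rw [mul_assoc, this, one_smul]

lemma symm0_sum (n : ℕ) (hn : 0 < n) : ∀ᵐ v ∂symm0 n, ∑ k, v k = ((n:ℝ)+1)/2 := by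
  have hms : MeasurableSet {v : Fin (n+1) → ℝ | ∑ k, v k = ((n:ℝ)+1)/2} :=
    measurableSet_eq_fun (by fun_prop) (by fun_prop)
  refine Measure.ae_smul_measure ?_ _
  rw [ae_iff, Measure.finsetSum_apply, Finset.sum_eq_zero]
  intro σ _
  rw [← ae_iff, ae_map_iff (bvec_meas' n σ).aemeasurable hms]
  refine Filter.Eventually.of_forall fun y => ?_
  rw [Equiv.sum_comp σ (fun k => bvec n k y), Fin.sum_univ_castSucc]
  have h1 : ∀ k : Fin n, bvec n k.castSucc y = (y + (k:ℕ))/n := by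
    intro k; simp [bvec]
  have h2 : bvec n (Fin.last n) y = 1 - y := by simp [bvec]
  simp_rw [h1, h2]
  rw [← Finset.sum_div, Finset.sum_add_distrib, Fin.sum_univ_eq_sum_range (fun k : ℕ => (k:ℝ))]
  have h3 : ∀ n : ℕ, (∑ k ∈ Finset.range n, (k:ℝ)) = n * (n - 1) / 2 := by
    intro n
    induction n with
    | zero => simp
    | succ n ih => rw [Finset.sum_range_succ, ih ]; push_cast; ring
  have hn' : (n:ℝ) ≠ 0 := by positivity
  rw [h3]
  simp
  field_simp
  ring

lemma symm0_symm (n : ℕ) (i j j' : Fin (n+1)) (hj : j ≠ i) (hj' : j' ≠ i) :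
    ∫ v, v i * v j ∂symm0 n = ∫ v, v i * v j' ∂symm0 n := by
  have hmap : (symm0 n).map (fun v k => v (Equiv.swap j j' k)) = symm0 n := by
    have hm : Measurable (fun (v : Fin (n+1) → ℝ) k => v (Equiv.swap j j' k)) := by fun_prop
    conv_lhs => rw [symm0, Measure.map_smul, Measure.map_finset_sum hm.aemeasurable]
    rw [symm0]
    congr 1
    refine Fintype.sum_equiv (Equiv.mulRight (Equiv.swap j j')) _ _ ?_
    intro σ
    rw [Measure.map_map hm (bvec_meas' n σ)]
    rfl
  conv_rhs => rw [← hmap]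
  rw [integral_map (Measurable.aemeasurable (by fun_prop)) (by fun_prop)]
  simp [Equiv.swap_apply_of_ne_of_ne hj.symm hj'.symm]

lemma symm0_corr (n : ℕ) (hn : 0 < n) (i j : Fin (n+1)) (hij : i ≠ j) :
    ∫ v, v i * v j ∂symm0 n = 1/4 - 1 / (12 * n) := by
  have := symm0_prob n
  have hL := fun k => law_memLp (measurable_pi_apply k) (symm0_law n hn k)
  have h1 : ∫ v, v i * ∑ k, v k ∂symm0 n = (n+1)/4 := by
    have : ∫ v, v i * ∑ k, v k ∂symm0 n = ∫ v, v i * (((n:ℝ)+1)/2) ∂symm0 n := by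
      refine integral_congr_ae ?_
      filter_upwards [symm0_sum n hn] with v hv
      rw [hv]
    rw [this, integral_mul_const, law_int1 (measurable_pi_apply i) (symm0_law n hn i)]
    ring
  simp_rw [Finset.mul_sum] at h1
  rw [integral_finsetSum _ (fun k _ => show Integrable (fun v : Fin (n+1) → ℝ => v i * v k) _ from (hL i).integrable_mul (hL k)),
    ← Finset.add_sum_erase _ _ (Finset.mem_univ i),
    law_int2 (measurable_pi_apply i) (symm0_law n hn i),
    Finset.sum_congr rfl (fun k hk => symm0_symm n i k j (Finset.ne_of_mem_erase hk) hij.symm)] at h1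
  simp at h1
  have hn' : (n:ℝ) ≠ 0 := by positivity
  field_simp
  linarith

lemma exists_V (m : ℕ) (hm : 2 ≤ m) : ∃ V : Measure (Fin m → ℝ), IsProbabilityMeasure V ∧
    (∀ k : Fin m, V.map (fun v => v k) = unif01) ∧
    (∀ k l : Fin m, pearson V (fun v => v k) (fun v => v l)
            = if k = l then (1:ℝ) else -(1 / ((m : ℝ) - 1))) := by
  obtain ⟨n, rfl⟩ : ∃ n, m = n + 1 := ⟨m-1, by omega⟩
  have hn : 0 < n := by omega
  have := symm0_prob n
  refine ⟨symm0 n, this, symm0_law n hn, fun k l => ?_⟩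
  rw [law_pearson (measurable_pi_apply k) (symm0_law n hn k)
    (measurable_pi_apply l) (symm0_law n hn l)]
  split_ifs with h
  · subst h
    rw [law_int2 (measurable_pi_apply k) (symm0_law n hn k)]; norm_num
  · rw [symm0_corr n hn k l h]
    have hn' : (n:ℝ) ≠ 0 := by positivity
    push_cast
    rw [add_sub_cancel_right]
    field_simp
    ring

lemma bern_prob {p : ℝ} (h0 : 0 ≤ p) (h1 : p ≤ 1) : IsProbabilityMeasure (bern p) := by
  constructor
  simp only [bern, Measure.coe_add, Measure.coe_smul, Pi.add_apply, Pi.smul_apply, measure_univ,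
    smul_eq_mul, mul_one]
  rw [← ENNReal.ofReal_add h0 (by linarith)]
  simp

lemma bern_int {p : ℝ} (h0 : 0 ≤ p) (h1 : p ≤ 1) (f : ℝ → ℝ) :
    ∫ x, f x ∂bern p = p * f 1 + (1 - p) * f 0 := by
  rw [bern, integral_add_measure, integral_smul_measure, integral_smul_measure, integral_dirac,
    integral_dirac, ENNReal.toReal_ofReal h0, ENNReal.toReal_ofReal (by linarith)]
  · simp
  · exact (integrable_dirac (by simp)).smul_measure ENNReal.ofReal_ne_top
  · exact (integrable_dirac (by simp)).smul_measure ENNReal.ofReal_ne_top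

lemma bern_memLp {p : ℝ} (h0 : 0 ≤ p) (h1 : p ≤ 1) : MemLp (fun x : ℝ => x) 2 (bern p) := by
  have := bern_prob h0 h1
  refine MemLp.of_bound (C := 1) (by fun_prop) ?_
  rw [bern, ae_add_measure_iff]
  constructor
  · refine Measure.ae_smul_measure ?_ _
    rw [ae_dirac_eq]; simp
  · refine Measure.ae_smul_measure ?_ _
    rw [ae_dirac_eq]; simp

lemma law_mix {p : ℝ} (h0 : 0 ≤ p) (h1 : p ≤ 1) :
    (unif01.prod (unif01.prod (bern p))).map
      (fun z => z.2.2 * z.1 + (1 - z.2.2) * z.2.1) = unif01 := by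
  have := bern_prob h0 h1
  refine Measure.ext_of_lintegral _ fun f hf => ?_
  rw [lintegral_map hf (by fun_prop), lintegral_prod _ (by fun_prop)]
  have h : ∀ x : ℝ, ∫⁻ y, f (y.2 * x + (1 - y.2) * y.1) ∂(unif01.prod (bern p))
      = ENNReal.ofReal p * f x + ENNReal.ofReal (1 - p) * ∫⁻ y, f y ∂unif01 := by
    intro x
    rw [lintegral_prod _ (by fun_prop)]
    simp only [bern, lintegral_add_measure, lintegral_smul_measure, lintegral_dirac, smul_eq_mul,
      one_mul, sub_self, zero_mul, add_zero, sub_zero, zero_add]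
    rw [lintegral_add_left (by fun_prop), lintegral_const_mul _ hf]
    simp
  simp only [h]
  rw [lintegral_add_left (by fun_prop), lintegral_const_mul _ hf, lintegral_const]
  simp only [measure_univ, mul_one]
  rw [← add_mul, ← ENNReal.ofReal_add h0 (by linarith)]
  simp

section pi
variable {ι : Type*} [Fintype ι] {Ω : ι → Type*} [∀ i, MeasurableSpace (Ω i)]
    {ν : (i : ι) → Measure (Ω i)} [∀ i, IsProbabilityMeasure (ν i)]

lemma pi_int1 (i : ι) (f : Ω i → ℝ) (hf : Measurable f) :
    ∫ x, f (x i) ∂Measure.pi ν = ∫ y, f y ∂ν i := by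
  rw [← (measurePreserving_eval ν i).map_eq, integral_map (measurable_pi_apply i).aemeasurable
    hf.aestronglyMeasurable]

lemma pi_int2 {i j : ι} (hij : i ≠ j) (f : Ω i → ℝ) (hf : Measurable f) (g : Ω j → ℝ)
    (hg : Measurable g) :
    ∫ x, f (x i) * g (x j) ∂Measure.pi ν = (∫ y, f y ∂ν i) * ∫ y, g y ∂ν j := by
  have h : iIndepFun (fun i (x : (i : ι) → Ω i) => x i) (Measure.pi ν) :=
    iIndepFun_pi (X := fun i x => x) (fun i => aemeasurable_id)
  have h2 := (h.indepFun hij).comp hf hg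
  have h3 := h2.integral_fun_mul_eq_mul_integral
    (hf.comp (measurable_pi_apply i)).aestronglyMeasurable
    (hg.comp (measurable_pi_apply j)).aestronglyMeasurable
  simp only [Function.comp_apply] at h3
  rw [h3, ← pi_int1 i f hf, ← pi_int1 j g hg]

lemma pi_law (i : ι) (f : Ω i → ℝ) (hf : Measurable f) (h : (ν i).map f = unif01) :
    (Measure.pi ν).map (fun x => f (x i)) = unif01 := by
  rw [← h, ← (measurePreserving_eval ν i).map_eq, Measure.map_map hf (measurable_pi_apply i)]
  rfl

end pi

section main
variable {S : ℕ} {ds : Fin S → ℕ} {ρ : Fin S → Fin S → ℝ}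

lemma lamb_mem (hds : ∀ s, 2 ≤ ds s)
    (hρss : ∀ s, -(1 / ((ds s : ℝ) - 1)) < ρ s s ∧ ρ s s < 1) (s : Fin S) :
    0 < lamb S ds ρ s ∧ lamb S ds ρ s < 1 := by
  have h2 : (2:ℝ) ≤ ds s := by exact_mod_cast hds s
  have hd : (0:ℝ) < (ds s : ℝ) - 1 := by linarith
  obtain ⟨ha, hb⟩ := hρss s
  unfold lamb
  constructor
  · apply div_pos _ (by linarith)
    have := mul_lt_mul_of_pos_left ha hd
    have e : ((ds s : ℝ) - 1) * -(1 / ((ds s : ℝ) - 1)) = -1 := by field_simp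
    linarith
  · rw [div_lt_one (by linarith)]
    nlinarith

lemma Wfun_meas (i : (s : Fin S) × Fin (ds s)) : Measurable (Wfun S ds i) := by
  unfold Wfun
  have h1 : Measurable fun ω : mixSpace S ds => ω.2.2 i.1 := by fun_prop
  have h2 : Measurable fun ω : mixSpace S ds => ω.1 i.1 := by fun_prop
  have h3 : Measurable fun ω : mixSpace S ds => ω.2.1 i.1 i.2 := by fun_prop
  exact (h1.mul h2).add ((measurable_const.sub h1).mul h3)

variable (hl : ∀ s, 0 < lamb S ds ρ s ∧ lamb S ds ρ s < 1)
  (μU : Measure (Fin S → ℝ)) [IsProbabilityMeasure μU]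
  (hU : ∀ s, μU.map (fun u => u s) = unif01)
  (V : (s : Fin S) → Measure (Fin (ds s) → ℝ)) [∀ s, IsProbabilityMeasure (V s)]
  (hV : ∀ s, ∀ k : Fin (ds s), (V s).map (fun v => v k) = unif01)

include hl in
lemma mix_prob : IsProbabilityMeasure (mixMeasure S ds ρ μU V) := by
  have := fun s => bern_prob (hl s).1.le (hl s).2.le
  unfold mixMeasure
  infer_instance

include hl hU hV in
lemma mix_law (i : (s : Fin S) × Fin (ds s)) :
    (mixMeasure S ds ρ μU V).map (Wfun S ds i) = unif01 := by
  have := fun s => bern_prob (hl s).1.le (hl s).2.le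
  have hv := pi_law (ν := V) i.1 (fun v => v i.2) (measurable_pi_apply _) (hV i.1 i.2)
  have hb := (measurePreserving_eval (fun s => bern (lamb S ds ρ s)) i.1).map_eq
  have hu := hU i.1
  have m1 : Measurable (fun x : (s : Fin S) → Fin (ds s) → ℝ => x i.1 i.2) := by fun_prop
  have m2 : Measurable (Function.eval i.1 : (Fin S → ℝ) → ℝ) := measurable_pi_apply _
  have m3 : Measurable (fun u : Fin S → ℝ => u i.1) := by fun_prop
  rw [← law_mix (hl i.1).1.le (hl i.1).2.le]
  nth_rw 1 [← hu]
  rw [← hv, ← hb, Measure.map_prod_map _ _ m1 m2, Measure.map_prod_map _ _ m3 (m1.prodMap m2),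
    Measure.map_map (by fun_prop) (m3.prodMap (m1.prodMap m2))]
  rfl

include hl hU hV in
lemma mix_prod (i j : (s : Fin S) × Fin (ds s)) :
    ∫ ω, Wfun S ds i ω * Wfun S ds j ω ∂(mixMeasure S ds ρ μU V) =
      (∫ u, u i.1 * u j.1 ∂μU) *
          (∫ b, b i.1 * b j.1 ∂(Measure.pi fun s => bern (lamb S ds ρ s)))
      + 1/4 * (∫ b, b i.1 * (1 - b j.1) ∂(Measure.pi fun s => bern (lamb S ds ρ s)))
      + 1/4 * (∫ b, (1 - b i.1) * b j.1 ∂(Measure.pi fun s => bern (lamb S ds ρ s)))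
      + (∫ v, v i.1 i.2 * v j.1 j.2 ∂(Measure.pi V)) *
          (∫ b, (1 - b i.1) * (1 - b j.1) ∂(Measure.pi fun s => bern (lamb S ds ρ s))) := by
  have := fun s => bern_prob (hl s).1.le (hl s).2.le
  set PB := Measure.pi fun s => bern (lamb S ds ρ s) with hPB
  have hv := fun i : (s : Fin S) × Fin (ds s) =>
    pi_law (ν := V) i.1 (fun v => v i.2) (measurable_pi_apply _) (hV i.1 i.2)
  have mv : ∀ i : (s : Fin S) × Fin (ds s),
    Measurable (fun x : (s : Fin S) → Fin (ds s) → ℝ => x i.1 i.2) := fun i => by fun_prop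
  have mu : ∀ s, Measurable (fun u : Fin S → ℝ => u s) := fun s => by fun_prop
  have LU := fun s => law_memLp (mu s) (hU s)
  have LV := fun i => law_memLp (mv i) (hv i)
  have LB : ∀ s, MemLp (fun b : Fin S → ℝ => b s) 2 PB := fun s =>
    (bern_memLp (hl s).1.le (hl s).2.le).comp_measurePreserving
      (measurePreserving_eval (fun s => bern (lamb S ds ρ s)) s)
  have LB' : ∀ s, MemLp (fun b : Fin S → ℝ => 1 - b s) 2 PB := fun s =>
    (memLp_const 1).sub (LB s)
  have key : ∀ (f : (Fin S → ℝ) → ℝ) (g : ((s : Fin S) → Fin (ds s) → ℝ) → ℝ)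
      (h : (Fin S → ℝ) → ℝ), ∫ ω, f ω.1 * (g ω.2.1 * h ω.2.2) ∂(mixMeasure S ds ρ μU V) =
      (∫ u, f u ∂μU) * ((∫ v, g v ∂Measure.pi V) * ∫ b, h b ∂PB) := by
    intro f g h
    rw [mixMeasure, integral_prod_mul f (fun y : ((s : Fin S) → Fin (ds s) → ℝ) × (Fin S → ℝ) => g y.1 * h y.2), integral_prod_mul g h]
  have keyI : ∀ (f : (Fin S → ℝ) → ℝ) (g : ((s : Fin S) → Fin (ds s) → ℝ) → ℝ)
      (h : (Fin S → ℝ) → ℝ), Integrable f μU → Integrable g (Measure.pi V) → Integrable h PB →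
      Integrable (fun ω : mixSpace S ds => f ω.1 * (g ω.2.1 * h ω.2.2))
        (mixMeasure S ds ρ μU V) := by
    intro f g h hf hg hh
    exact hf.mul_prod (hg.mul_prod hh)
  have i1 := keyI (fun u => u i.1 * u j.1) (fun _ => 1) (fun b => b i.1 * b j.1)
    ((LU _).integrable_mul (LU _)) (integrable_const _) ((LB _).integrable_mul (LB _))
  have i2 := keyI (fun u => u i.1) (fun v => v j.1 j.2) (fun b => b i.1 * (1 - b j.1))
    ((LU _).integrable one_le_two) ((LV _).integrable one_le_two) ((LB _).integrable_mul (LB' _))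
  have i3 := keyI (fun u => u j.1) (fun v => v i.1 i.2) (fun b => (1 - b i.1) * b j.1)
    ((LU _).integrable one_le_two) ((LV _).integrable one_le_two) ((LB' _).integrable_mul (LB _))
  have i4 := keyI (fun u => 1) (fun v => v i.1 i.2 * v j.1 j.2)
    (fun b => (1 - b i.1) * (1 - b j.1))
    (integrable_const _) ((LV _).integrable_mul (LV _)) ((LB' _).integrable_mul (LB' _))
  have e : ∀ ω : mixSpace S ds, Wfun S ds i ω * Wfun S ds j ω =
      (((ω.1 i.1 * ω.1 j.1) * (1 * (ω.2.2 i.1 * ω.2.2 j.1))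
      + ω.1 i.1 * (ω.2.1 j.1 j.2 * (ω.2.2 i.1 * (1 - ω.2.2 j.1))))
      + ω.1 j.1 * (ω.2.1 i.1 i.2 * ((1 - ω.2.2 i.1) * ω.2.2 j.1)))
      + 1 * ((ω.2.1 i.1 i.2 * ω.2.1 j.1 j.2) * ((1 - ω.2.2 i.1) * (1 - ω.2.2 j.1))) := by
    intro ω; unfold Wfun; ring
  simp_rw [e]
  rw [integral_add ((i1.fun_add i2).fun_add i3) i4, integral_add (i1.fun_add i2) i3, integral_add i1 i2]
  rw [key (fun u => u i.1 * u j.1) (fun _ => 1) (fun b => b i.1 * b j.1),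
    key (fun u => u i.1) (fun v => v j.1 j.2) (fun b => b i.1 * (1 - b j.1)),
    key (fun u => u j.1) (fun v => v i.1 i.2) (fun b => (1 - b i.1) * b j.1),
    key (fun u => 1) (fun v => v i.1 i.2 * v j.1 j.2) (fun b => (1 - b i.1) * (1 - b j.1))]
  rw [law_int1 (mu i.1) (hU _), law_int1 (mu j.1) (hU _), law_int1 (mv i) (hv i),
    law_int1 (mv j) (hv j)]
  simp
  ring

include hU hV in
lemma mix_pearson (hds : ∀ s, 2 ≤ ds s)
    (hρss : ∀ s, -(1 / ((ds s : ℝ) - 1)) < ρ s s ∧ ρ s s < 1)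
    (hUc : ∀ k l : Fin S, pearson μU (fun u => u k) (fun u => u l) = corrM S ds ρ k l)
    (hVc : ∀ s, ∀ k l : Fin (ds s), pearson (V s) (fun v => v k) (fun v => v l)
            = if k = l then (1:ℝ) else -(1 / ((ds s : ℝ) - 1)))
    (i j : (s : Fin S) × Fin (ds s)) :
    pearson (mixMeasure S ds ρ μU V) (Wfun S ds i) (Wfun S ds j) = blockMatrix S ds ρ i j := by
  have hl := lamb_mem hds hρss
  have := fun s => bern_prob (hl s).1.le (hl s).2.le
  have := mix_prob hl μU V
  have hW := mix_law hl μU hU V hV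
  rw [law_pearson (Wfun_meas i) (hW i) (Wfun_meas j) (hW j)]
  by_cases hij : i = j
  · subst hij
    rw [law_int2 (Wfun_meas i) (hW i)]
    simp [blockMatrix]; norm_num
  rw [mix_prod hl μU hU V hV]
  obtain ⟨s, k⟩ := i
  obtain ⟨t, l⟩ := j
  have mu : ∀ s, Measurable (fun u : Fin S → ℝ => u s) := fun s => by fun_prop
  have h2 : ∀ s, (2:ℝ) ≤ ds s := fun s => by exact_mod_cast hds s
  by_cases hst : s = t
  · subst hst
    have hkl : k ≠ l := fun h => hij (by rw [h])
    have hkl' : (k : ℕ) ≠ l := fun h => hkl (Fin.ext h)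
    have hc := hVc s k l
    rw [law_pearson (measurable_pi_apply k) (hV s k) (measurable_pi_apply l) (hV s l),
      if_neg hkl] at hc
    simp only [blockMatrix, Matrix.of_apply, if_true, if_neg hkl']
    rw [law_int2 (mu s) (hU s),
      pi_int1 (ν := fun s => bern (lamb S ds ρ s)) s (fun x : ℝ => x * x) (by fun_prop),
      pi_int1 (ν := fun s => bern (lamb S ds ρ s)) s (fun x : ℝ => x * (1 - x)) (by fun_prop),
      pi_int1 (ν := fun s => bern (lamb S ds ρ s)) s (fun x : ℝ => (1 - x) * x) (by fun_prop),
      pi_int1 (ν := fun s => bern (lamb S ds ρ s)) s (fun x : ℝ => (1 - x) * (1 - x)) (by fun_prop),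
      pi_int1 (ν := V) s (fun v : Fin (ds s) → ℝ => v k * v l) (by fun_prop)]
    simp only [bern_int (hl s).1.le (hl s).2.le]
    have hc' : ∫ v, v k * v l ∂V s = (3 - 1 / ((ds s : ℝ) - 1)) / 12 := by linarith
    rw [hc']
    have : (ds s : ℝ) - 1 ≠ 0 := by linarith [h2 s]
    have : (ds s : ℝ) ≠ 0 := by linarith [h2 s]
    unfold lamb
    field_simp
    ring
  · have hc := hUc s t
    rw [law_pearson (mu s) (hU s) (mu t) (hU t), corrM, Matrix.of_apply, if_neg hst] at hc
    simp only [blockMatrix, Matrix.of_apply, if_neg hst]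
    rw [pi_int2 (ν := fun s => bern (lamb S ds ρ s)) hst (fun x : ℝ => x) (by fun_prop) (fun x : ℝ => x) (by fun_prop),
      pi_int2 (ν := fun s => bern (lamb S ds ρ s)) hst (fun x : ℝ => x) (by fun_prop) (fun x : ℝ => 1 - x) (by fun_prop),
      pi_int2 (ν := fun s => bern (lamb S ds ρ s)) hst (fun x : ℝ => 1 - x) (by fun_prop) (fun x : ℝ => x) (by fun_prop),
      pi_int2 (ν := fun s => bern (lamb S ds ρ s)) hst (fun x : ℝ => 1 - x) (by fun_prop) (fun x : ℝ => 1 - x) (by fun_prop),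
      pi_int2 (ν := V) hst (fun v : Fin (ds s) → ℝ => v k) (by fun_prop)
        (fun v : Fin (ds t) → ℝ => v l) (by fun_prop),
      law_int1 (measurable_pi_apply k) (hV s k), law_int1 (measurable_pi_apply l) (hV t l)]
    simp only [bern_int (hl s).1.le (hl s).2.le, bern_int (hl t).1.le (hl t).2.le]
    have hs := (hl s).1.ne'
    have ht := (hl t).1.ne'
    have hds' : (ds s : ℝ) ≠ 0 := by linarith [h2 s]
    have hdt' : (ds t : ℝ) ≠ 0 := by linarith [h2 t]
    have e1 : 1 + ((ds s : ℝ) - 1) * ρ s s = lamb S ds ρ s * ds s := by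
      unfold lamb; field_simp
    have e2 : 1 + ((ds t : ℝ) - 1) * ρ t t = lamb S ds ρ t * ds t := by
      unfold lamb; field_simp
    rw [e1, e2] at hc
    generalize lamb S ds ρ s = a at *
    generalize lamb S ds ρ t = b at *
    have hc' : ∫ u, u s * u t ∂μU = (3 + ρ s t / (a * b)) / 12 := by
      have : (ds s : ℝ) * ds t * ρ s t / (a * ds s * (b * ds t)) = ρ s t / (a * b) := by
        field_simp
      linarith
    rw [hc']
    field_simp
    ring

end main

/-- if the `S×S` matrix `M` is the correlation matrix of a random vector
with uniform (0,1) margins, then so is the `d×d` block homogeneous matrix `P`; moreover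
the explicit construction `W_{(s,k)} = B_s U_s + (1 − B_s) V_{s,k}` has uniform margins
and correlation matrix `P`. -/
theorem block_spearman_rho_compatibility
    (S : ℕ) (ds : Fin S → ℕ) (hds : ∀ s, 2 ≤ ds s)
    (ρ : Fin S → Fin S → ℝ) (hsym : ∀ s t, ρ s t = ρ t s)
    (hrange : ∀ s t, ρ s t ∈ Set.Icc (-1:ℝ) 1)
    (hρss : ∀ s, -(1 / ((ds s : ℝ) - 1)) < ρ s s ∧ ρ s s < 1) :
    ((∃ μU : Measure (Fin S → ℝ), IsProbabilityMeasure μU ∧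
        (∀ s, μU.map (fun u => u s) = unif01) ∧
        (∀ k l : Fin S, pearson μU (fun u => u k) (fun u => u l) = corrM S ds ρ k l)) →
      ∃ μ : Measure (((s : Fin S) × Fin (ds s)) → ℝ), IsProbabilityMeasure μ ∧
        (∀ i, μ.map (fun w => w i) = unif01) ∧
        (∀ i j, pearson μ (fun w => w i) (fun w => w j) = blockMatrix S ds ρ i j)) ∧
    (∀ μU : Measure (Fin S → ℝ), IsProbabilityMeasure μU →
      (∀ s, μU.map (fun u => u s) = unif01) →
      (∀ k l : Fin S, pearson μU (fun u => u k) (fun u => u l) = corrM S ds ρ k l) →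
      ∀ V : (s : Fin S) → Measure (Fin (ds s) → ℝ),
        (∀ s, IsProbabilityMeasure (V s)) →
        (∀ s, ∀ k : Fin (ds s), (V s).map (fun v => v k) = unif01) →
        (∀ s, ∀ k l : Fin (ds s), pearson (V s) (fun v => v k) (fun v => v l)
            = if k = l then (1:ℝ) else -(1 / ((ds s : ℝ) - 1))) →
        (∀ i : (s : Fin S) × Fin (ds s),
            (mixMeasure S ds ρ μU V).map (Wfun S ds i) = unif01) ∧
        (∀ i j : (s : Fin S) × Fin (ds s),
            pearson (mixMeasure S ds ρ μU V) (Wfun S ds i) (Wfun S ds j)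
              = blockMatrix S ds ρ i j)) := by
  have part2 : ∀ μU : Measure (Fin S → ℝ), IsProbabilityMeasure μU →
      (∀ s, μU.map (fun u => u s) = unif01) →
      (∀ k l : Fin S, pearson μU (fun u => u k) (fun u => u l) = corrM S ds ρ k l) →
      ∀ V : (s : Fin S) → Measure (Fin (ds s) → ℝ),
        (∀ s, IsProbabilityMeasure (V s)) →
        (∀ s, ∀ k : Fin (ds s), (V s).map (fun v => v k) = unif01) →
        (∀ s, ∀ k l : Fin (ds s), pearson (V s) (fun v => v k) (fun v => v l)
            = if k = l then (1:ℝ) else -(1 / ((ds s : ℝ) - 1))) →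
        (∀ i : (s : Fin S) × Fin (ds s),
            (mixMeasure S ds ρ μU V).map (Wfun S ds i) = unif01) ∧
        (∀ i j : (s : Fin S) × Fin (ds s),
            pearson (mixMeasure S ds ρ μU V) (Wfun S ds i) (Wfun S ds j)
              = blockMatrix S ds ρ i j) := by
    intro μU hp hU hUc V hVp hV hVc
    exact ⟨mix_law (lamb_mem hds hρss) μU hU V hV,
      mix_pearson μU hU V hV hds hρss hUc hVc⟩
  refine ⟨?_, part2⟩
  rintro ⟨μU, hp, hU, hUc⟩
  choose V hVp hV hVc using fun s => exists_V (ds s) (hds s)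
  obtain ⟨hl, hc⟩ := part2 μU hp hU hUc V hVp hV hVc
  have hprob := mix_prob (lamb_mem hds hρss) μU V
  have hm : Measurable (fun (ω : mixSpace S ds) i => Wfun S ds i ω) :=
    measurable_pi_lambda _ fun i => Wfun_meas i
  have hprob' := Measure.isProbabilityMeasure_map (μ := mixMeasure S ds ρ μU V) hm.aemeasurable
  have hlaw : ∀ i, ((mixMeasure S ds ρ μU V).map (fun ω i => Wfun S ds i ω)).map
      (fun w => w i) = unif01 := by
    intro i
    rw [Measure.map_map (measurable_pi_apply i) hm]
    exact hl i
  refine ⟨(mixMeasure S ds ρ μU V).map (fun ω i => Wfun S ds i ω), hprob', hlaw, fun i j => ?_⟩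
  rw [← hc i j, law_pearson (Wfun_meas i) (hl i) (Wfun_meas j) (hl j),
    law_pearson (measurable_pi_apply i) (hlaw i) (measurable_pi_apply j) (hlaw j),
    integral_map hm.aemeasurable (Measurable.aestronglyMeasurable (by fun_prop))]
end
end

section
/- Let X = (X1,…,Xd) be a random vector with continuous margins F1,…,Fd, set Uj = Fj(Xj), let Ũ = (Ũ1,…,Ũd) be an independent copy of U = (U1,…,Ud), and define Bj = 1{Uj ≤ Ũj} for j = 1,…,d. Then each Bj ~ Bern(1/2), and the Pearson correlation ρ(Bi,Bj) equals Kendall's tau τ(Xi,Xj) = 4∫_{[0,1]^2} C_{ij} dC_{ij} − 1 for all i, j, where C_{ij} is the copula of (Xi,Xj). Consequently, every d×d matrix of pairwise Kendall's taus of a continuous random vector is a correlation matrix of a random vector with Bern(1/2) margins: T_d ⊆ P^B_d(1/2). -/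
open MeasureTheory ProbabilityTheory Set

noncomputable section

/-- The joint distribution function of a measure on ℝ². -/
def cdf2 (μ : Measure (ℝ × ℝ)) (u v : ℝ) : ℝ := (μ (Set.Iic u ×ˢ Set.Iic v)).toReal

/-- The `j`-th marginal distribution function of a random vector with law `μ`. -/
def marginCDF (d : ℕ) (μ : Measure (Fin d → ℝ)) (j : Fin d) : ℝ → ℝ :=
  cdfOf (μ.map fun x => x j)

/-- The copula of the pair `(X_i, X_j)` (for continuous margins): the law of
`(F_i(X_i), F_j(X_j))`. -/
def pairCopula (d : ℕ) (μ : Measure (Fin d → ℝ)) (i j : Fin d) : Measure (ℝ × ℝ) :=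
  μ.map (fun x => (marginCDF d μ i (x i), marginCDF d μ j (x j)))

/-- Kendall's tau of the pair `(X_i, X_j)`: `τ = 4 ∫ C_{ij} dC_{ij} − 1`. -/
def kendallTau (d : ℕ) (μ : Measure (Fin d → ℝ)) (i j : Fin d) : ℝ :=
  4 * (∫ p, cdf2 (pairCopula d μ i j) p.1 p.2 ∂(pairCopula d μ i j)) - 1

/-- The indicator `B_j = 1{U_j ≤ Ũ_j}` on the product space carrying `(X, X̃)`. -/
def kendallInd (d : ℕ) (μ : Measure (Fin d → ℝ)) (j : Fin d) :
    (Fin d → ℝ) × (Fin d → ℝ) → ℝ :=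
  fun ω => if marginCDF d μ j (ω.1 j) ≤ marginCDF d μ j (ω.2 j) then 1 else 0

lemma level_null (ν : Measure ℝ) [IsProbabilityMeasure ν] (hc : Continuous (cdfOf ν)) (c : ℝ) :
    ν {x | cdfOf ν x = c} = 0 := by
  have hF : (cdf ν : ℝ → ℝ) = cdfOf ν := by
    funext x
    rw [cdf_eq_real]; rfl
  have hcl : IsClosed {x | cdfOf ν x = c} := isClosed_eq hc continuous_const
  rw [hcl.measurableSet.measure_eq_iSup_isCompact]
  simp only [ENNReal.iSup_eq_zero]
  intro K hK hKc
  rcases K.eq_empty_or_nonempty with rfl | hne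
  · simp
  have ha := hK (hKc.sInf_mem hne)
  have hb := hK (hKc.sSup_mem hne)
  have hsub : K ⊆ Icc (sInf K) (sSup K) := fun x hx =>
    ⟨csInf_le hKc.bddBelow hx, le_csSup hKc.bddAbove hx⟩
  refine measure_mono_null hsub ?_
  have h1 := (cdf ν).measure_Icc (sInf K) (sSup K)
  rw [measure_cdf] at h1
  rw [h1, hF]
  have hl : Function.leftLim (cdfOf ν) (sInf K) = cdfOf ν (sInf K) :=
    leftLim_eq_of_tendsto ((hc.tendsto _).mono_left nhdsWithin_le_nhds)
  rw [hl, ha, hb]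
  simp

section
variable {d : ℕ} (μ : Measure (Fin d → ℝ)) [IsProbabilityMeasure μ]

lemma meas_U (hc : ∀ j, Continuous (marginCDF d μ j)) (j : Fin d) :
    Measurable (fun x : Fin d → ℝ => marginCDF d μ j (x j)) :=
  (hc j).measurable.comp (measurable_pi_apply j)

lemma meas_set (hc : ∀ j, Continuous (marginCDF d μ j)) (j : Fin d) :
    MeasurableSet {ω : (Fin d → ℝ) × (Fin d → ℝ) |
      marginCDF d μ j (ω.1 j) ≤ marginCDF d μ j (ω.2 j)} :=
  measurableSet_le ((meas_U μ hc j).comp measurable_fst) ((meas_U μ hc j).comp measurable_snd)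

lemma ind_eq (j : Fin d) : kendallInd d μ j =
    Set.indicator {ω : (Fin d → ℝ) × (Fin d → ℝ) |
      marginCDF d μ j (ω.1 j) ≤ marginCDF d μ j (ω.2 j)} (fun _ => (1:ℝ)) := by
  funext ω
  simp [kendallInd, Set.indicator_apply]

lemma meas_ind (hc : ∀ j, Continuous (marginCDF d μ j)) (j : Fin d) :
    Measurable (kendallInd d μ j) := by
  rw [ind_eq]
  exact measurable_const.indicator (meas_set μ hc j)

lemma eq_null (hc : ∀ j, Continuous (marginCDF d μ j)) (j : Fin d) :
    (μ.prod μ) {ω : (Fin d → ℝ) × (Fin d → ℝ) |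
      marginCDF d μ j (ω.1 j) = marginCDF d μ j (ω.2 j)} = 0 := by
  have hm : MeasurableSet {ω : (Fin d → ℝ) × (Fin d → ℝ) |
      marginCDF d μ j (ω.1 j) = marginCDF d μ j (ω.2 j)} :=
    measurableSet_eq_fun ((meas_U μ hc j).comp measurable_fst)
      ((meas_U μ hc j).comp measurable_snd)
  rw [Measure.measure_prod_null hm]
  refine Filter.Eventually.of_forall fun x => ?_
  have : IsProbabilityMeasure (μ.map fun x : Fin d → ℝ => x j) :=
    Measure.isProbabilityMeasure_map (measurable_pi_apply j).aemeasurable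
  have h := level_null (μ.map fun x : Fin d → ℝ => x j) (hc j) (marginCDF d μ j (x j))
  rw [Measure.map_apply (measurable_pi_apply j)
    (isClosed_eq (hc j) continuous_const).measurableSet] at h
  refine measure_mono_null ?_ h
  intro y hy
  exact Eq.symm hy

lemma half (hc : ∀ j, Continuous (marginCDF d μ j)) (j : Fin d) :
    (μ.prod μ) {ω : (Fin d → ℝ) × (Fin d → ℝ) |
      marginCDF d μ j (ω.1 j) ≤ marginCDF d μ j (ω.2 j)} = 2⁻¹ := by
  set A := {ω : (Fin d → ℝ) × (Fin d → ℝ) |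
      marginCDF d μ j (ω.1 j) ≤ marginCDF d μ j (ω.2 j)} with hA
  have hAm : MeasurableSet A := meas_set μ hc j
  set B := {ω : (Fin d → ℝ) × (Fin d → ℝ) |
      marginCDF d μ j (ω.2 j) ≤ marginCDF d μ j (ω.1 j)} with hB
  have hBA : (μ.prod μ) B = (μ.prod μ) A := by
    conv_rhs => rw [← Measure.prod_swap, Measure.map_apply measurable_swap hAm]
    rfl
  have hI : (μ.prod μ) (B ∩ A) = 0 :=
    measure_mono_null (fun ω h => le_antisymm h.2 h.1) (eq_null μ hc j)
  have hU : B ∪ A = univ := by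
    ext ω
    simpa [A, B] using le_total _ _
  have h := measure_union_add_inter (μ := μ.prod μ) B hAm
  rw [hI, hU, hBA, measure_univ, add_zero, ← two_mul] at h
  exact ENNReal.eq_inv_of_mul_eq_one_left (by rw [mul_comm]; exact h.symm)

lemma law (hc : ∀ j, Continuous (marginCDF d μ j)) (j : Fin d) :
    (μ.prod μ).map (kendallInd d μ j) = bern (1/2) := by
  ext s hs
  have hA := meas_set μ hc j
  have h1 := half μ hc j
  have h2 := prob_compl_eq_one_sub (μ := μ.prod μ) hA
  rw [h1, ENNReal.one_sub_inv_two] at h2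
  have hh : ENNReal.ofReal (1/2) = 2⁻¹ := by
    rw [one_div, ENNReal.ofReal_inv_of_pos (by norm_num)]; simp
  have hh' : ENNReal.ofReal (1 - 1/2) = 2⁻¹ := by
    rw [← hh]; norm_num
  rw [Measure.map_apply (meas_ind μ hc j) hs, ind_eq, bern, hh, hh']
  classical
  rw [Set.indicator_const_preimage_eq_union]
  by_cases m1 : (1:ℝ) ∈ s <;> by_cases m0 : (0:ℝ) ∈ s <;>
    simp [m1, m0, h1, h2, hs, ENNReal.inv_two_add_inv_two]

lemma int_ind (hc : ∀ j, Continuous (marginCDF d μ j)) (j : Fin d) :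
    ∫ ω, kendallInd d μ j ω ∂(μ.prod μ) = 1/2 := by
  rw [ind_eq, integral_indicator_const _ (meas_set μ hc j), measureReal_def, half μ hc j]
  simp

lemma var_ind (hc : ∀ j, Continuous (marginCDF d μ j)) (j : Fin d) :
    variance (kendallInd d μ j) (μ.prod μ) = 1/4 := by
  have hb : MemLp (kendallInd d μ j) 2 (μ.prod μ) := by
    rw [ind_eq]
    exact (memLp_const 1).indicator (meas_set μ hc j)
  have hsq : kendallInd d μ j ^ 2 = kendallInd d μ j := by
    funext ω
    simp only [Pi.pow_apply, kendallInd]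
    split_ifs <;> norm_num
  rw [variance_eq_sub hb, hsq, int_ind μ hc j]
  norm_num

lemma int_mul (hc : ∀ j, Continuous (marginCDF d μ j)) (i j : Fin d) :
    ∫ ω, kendallInd d μ i ω * kendallInd d μ j ω ∂(μ.prod μ) =
      ∫ p, cdf2 (pairCopula d μ i j) p.1 p.2 ∂(pairCopula d μ i j) := by
  set U : (Fin d → ℝ) → ℝ × ℝ :=
    fun x => (marginCDF d μ i (x i), marginCDF d μ j (x j)) with hU
  have hUm : Measurable U := (meas_U μ hc i).prodMk (meas_U μ hc j)
  have hfm : Measurable fun ω => kendallInd d μ i ω * kendallInd d μ j ω :=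
    (meas_ind μ hc i).mul (meas_ind μ hc j)
  have hfi : Integrable (fun ω => kendallInd d μ i ω * kendallInd d μ j ω) (μ.prod μ) := by
    refine Integrable.of_bound hfm.aestronglyMeasurable 1 (Filter.Eventually.of_forall fun ω => ?_)
    simp only [kendallInd]
    split_ifs <;> norm_num
  have hpc : pairCopula d μ i j = μ.map U := rfl
  have : IsProbabilityMeasure (pairCopula d μ i j) := by
    rw [hpc]; exact Measure.isProbabilityMeasure_map hUm.aemeasurable
  have hcm : Measurable fun p : ℝ × ℝ => cdf2 (pairCopula d μ i j) p.1 p.2 := by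
    have hS : MeasurableSet {q : (ℝ × ℝ) × (ℝ × ℝ) | q.2.1 ≤ q.1.1 ∧ q.2.2 ≤ q.1.2} := by
      exact (measurableSet_le (measurable_fst.comp measurable_snd)
        (measurable_fst.comp measurable_fst)).inter
        (measurableSet_le (measurable_snd.comp measurable_snd)
        (measurable_snd.comp measurable_fst))
    exact (measurable_measure_prodMk_left (ν := pairCopula d μ i j) hS).ennreal_toReal
  rw [integral_prod_symm _ hfi]
  rw [hpc] at hcm ⊢
  rw [integral_map hUm.aemeasurable hcm.aestronglyMeasurable]
  refine integral_congr_ae (Filter.Eventually.of_forall fun y => ?_)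
  have hm : MeasurableSet (U ⁻¹' (Iic (U y).1 ×ˢ Iic (U y).2)) :=
    hUm (measurableSet_Iic.prod measurableSet_Iic)
  have : (fun x => kendallInd d μ i (x, y) * kendallInd d μ j (x, y)) =
      Set.indicator (U ⁻¹' (Iic (U y).1 ×ˢ Iic (U y).2)) (fun _ => (1:ℝ)) := by
    funext x
    simp only [kendallInd, Set.indicator_apply, U, mem_preimage, mem_prod, mem_Iic]
    split_ifs <;> simp_all
  simp only [this]
  rw [integral_indicator_const _ hm, cdf2,
    Measure.map_apply hUm (measurableSet_Iic.prod measurableSet_Iic)]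
  simp [measureReal_def]

lemma pearson_eq (hc : ∀ j, Continuous (marginCDF d μ j)) (i j : Fin d) :
    pearson (μ.prod μ) (kendallInd d μ i) (kendallInd d μ j) = kendallTau d μ i j := by
  rw [pearson, kendallTau, int_mul μ hc, int_ind μ hc, int_ind μ hc, var_ind μ hc, var_ind μ hc,
    Real.sqrt_mul_self (by norm_num)]
  ring

end

/-- with `Ũ` an independent copy and `B_j = 1{U_j ≤ Ũ_j}`, each
`B_j ~ Bern(1/2)` and `ρ(B_i, B_j) = τ(X_i, X_j)`; consequently every matrix of
pairwise Kendall's taus of a continuous random vector is a correlation matrix of a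
random vector with `Bern(1/2)` margins: `T_d ⊆ P^B_d(1/2)`. -/
theorem kendall_tau_matrices_subset_bernoulli_corr_matrices (d : ℕ) :
    (∀ μ : Measure (Fin d → ℝ), IsProbabilityMeasure μ →
      (∀ j, Continuous (marginCDF d μ j)) →
      (∀ j : Fin d, (μ.prod μ).map (kendallInd d μ j) = bern (1/2)) ∧
      (∀ i j : Fin d,
        pearson (μ.prod μ) (kendallInd d μ i) (kendallInd d μ j) = kendallTau d μ i j)) ∧
    (∀ P : Matrix (Fin d) (Fin d) ℝ,
      (∃ μ : Measure (Fin d → ℝ), IsProbabilityMeasure μ ∧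
        (∀ j, Continuous (marginCDF d μ j)) ∧
        (∀ i j, P i j = kendallTau d μ i j)) →
      P ∈ PBd d) := by
  refine ⟨fun μ hμ hc => ⟨law μ hc, pearson_eq μ hc⟩, ?_⟩
  rintro P ⟨μ, hμ, hc, hP⟩
  have hm : Measurable (fun ω (j : Fin d) => kendallInd d μ j ω) :=
    measurable_pi_lambda _ fun j => meas_ind μ hc j
  refine ⟨(μ.prod μ).map (fun ω j => kendallInd d μ j ω),
    Measure.isProbabilityMeasure_map hm.aemeasurable, fun j => ?_, fun i j => ?_⟩
  · rw [Measure.map_map (measurable_pi_apply j) hm]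
    exact law μ hc j
  · rw [hP, ← pearson_eq μ hc, pearson, pearson,
      integral_map hm.aemeasurable (by fun_prop),
      integral_map hm.aemeasurable (measurable_pi_apply i).aestronglyMeasurable,
      integral_map hm.aemeasurable (measurable_pi_apply j).aestronglyMeasurable,
      variance_map (measurable_pi_apply i).aemeasurable hm.aemeasurable,
      variance_map (measurable_pi_apply j).aemeasurable hm.aemeasurable]
    rfl
end
end
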